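/- Let x > 0 be real, set q = e^{−π/x} and μ = R(−q) · R(q²)², where R denotes the Rogers–Ramanujan continued fraction. Then F_{(5,1)}(x) = −(π/(5√5 · x)) · log( (2 − μ + 18μ² + μ³ + 2μ⁴ + 5√5(μ + μ³)) / (2 − μ + 18μ² + μ³ + 2μ⁴ − 5√5(μ + μ³)) ) − (π/(5x)) · log( (1 + μ − μ²) / (1 − 4μ − μ²) ). -/

import Mathlib

open Filter

/-- The Legendre symbol `(n|5)`: `+1` if `n ≡ ±1 (mod 5)`, `-1` if `n ≡ ±2 (mod 5)`,
`0` if `5 ∣ n`. -/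
def legSym5 (n : ℕ) : ℤ :=
  if n % 5 = 1 ∨ n % 5 = 4 then 1 else if n % 5 = 2 ∨ n % 5 = 3 then -1 else 0

/-- The real fifth root of a real number `t`. -/
noncomputable def fifthRoot (t : ℝ) : ℝ := Real.sign t * |t| ^ ((1 : ℝ) / 5)

/-- The Rogers–Ramanujan continued fraction, via the product formula
`R(t) = t^{1/5} ∏_{n=1}^∞ (1 - t^n)^{(n|5)}` for real `|t| < 1`. -/
noncomputable def RR (t : ℝ) : ℝ :=
  fifthRoot t * ∏' n : ℕ, (1 - t ^ (n + 1)) ^ legSym5 (n + 1)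

/-!
Summing over `m` by partial fractions turns the inner sum for `b = 5n + 1` into a multiple of
`1 / (|b| sinh (π |b| / x))`, and expanding the hyperbolic sine into a geometric series leaves the
terms `r ^ |b| / |b|` with `r = q ^ (2k + 1)`. The values `|5n + 1|` are the positive integers
congruent to `±1` modulo five, and detecting that congruence with fifth roots of unity sums the
series over `n` to a combination of the logarithms of `1 + r`, `1 - φ r + r ^ 2` and
`1 - (1 - φ) r + r ^ 2`, where `φ` is the golden ratio. Summing over `k` then gives the logarithms
of three infinite products in `Q = -q`.

Two relations determine these products. Multiplying the five-dissection of the theta function at a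
fifth root of unity over the five rotations of its nome expresses the ratio of the two golden
products through `R(Q) ^ 5` and `R(Q ^ 2) ^ 5`; splitting the square of the theta series along a
sublattice of index five in `ℤ²` evaluates the remaining product. Quadratic relations between theta
products to the modulus ten, which are instances of the Weierstrass three-term relation, make all of
these quantities rational functions of Ramanujan's parameter `R(Q) R(Q ^ 2) ^ 2`, which is `μ`.
-/

open Topology

section InfiniteProducts

theorem hasProd_of_residues {α : Type*} [CommMonoid α] [TopologicalSpace α] [ContinuousMul α]
    {m : ℕ} (hm : 0 < m) {f : ℕ → α} {a : ℕ → α}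
    (hf : ∀ i < m, HasProd (fun k => f (m * k + i)) (a i)) :
    HasProd f (∏ i ∈ Finset.range m, a i) := by
  have on_residue :
      ∀ i ∈ Finset.range m, HasProd (fun n => if n % m = i then f n else 1) (a i) := by
    intro i hi
    have hi' := Finset.mem_range.1 hi
    have hinj : Function.Injective fun k => m * k + i := fun k l h =>
      Nat.eq_of_mul_eq_mul_left hm (Nat.add_right_cancel h)
    refine (hinj.hasProd_iff fun n hn => if_neg fun hmod => hn ⟨n / m, ?_⟩).1 ?_
    · exact hmod ▸ Nat.div_add_mod n m
    · simpa [Function.comp_def, Nat.mod_eq_of_lt hi'] using hf i hi'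
  refine (hasProd_prod on_residue).congr_fun fun n => ?_
  simp [Nat.mod_lt n hm]

end InfiniteProducts

section QPochhammer

variable {K : Type*} [NormedField K]

theorem norm_pow_lt_one {q : K} (hq : ‖q‖ < 1) {n : ℕ} (hn : n ≠ 0) : ‖q ^ n‖ < 1 := by
  simpa using pow_lt_one₀ (norm_nonneg q) hq hn

theorem one_sub_ne_zero_of_norm_lt_one {x : K} (hx : ‖x‖ < 1) : 1 - x ≠ 0 := by
  rintro h
  simp [← sub_eq_zero.1 h] at hx

/-- The infinite `q`-shifted factorial `(x; q)_∞ = ∏_{k ≥ 0} (1 - x q ^ k)`. -/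
noncomputable def qPochhammer (x q : K) : K := ∏' k : ℕ, (1 - x * q ^ k)

variable {q : K}

theorem summable_norm_neg_mul_pow (x : K) (hq : ‖q‖ < 1) :
    Summable fun k : ℕ => ‖-(x * q ^ k)‖ := by
  simpa using (summable_geometric_of_lt_one (norm_nonneg q) hq).mul_left ‖x‖

/-- The modified theta function `[x; q] = (x; q)_∞ (q / x; q)_∞`. -/
noncomputable def qBracket (x q : K) : K := qPochhammer x q * qPochhammer (q / x) q

theorem qBracket_div_left (hq0 : q ≠ 0) (x : K) : qBracket (q / x) q = qBracket x q := by
  rw [qBracket, qBracket, div_div_cancel₀ hq0, mul_comm]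

variable [CompleteSpace K]

theorem qPochhammer_ne_zero {x : K} (hq : ‖q‖ < 1) (hx : ‖x‖ < 1) :
    qPochhammer x q ≠ 0 := by
  have factor_ne_zero (k : ℕ) : 1 + -(x * q ^ k) ≠ 0 := by
    rw [← sub_eq_add_neg]
    refine one_sub_ne_zero_of_norm_lt_one ?_
    rw [norm_mul, norm_pow]
    exact (mul_le_of_le_one_right (norm_nonneg x) (pow_le_one₀ (norm_nonneg q) hq.le)).trans_lt hx
  simpa only [qPochhammer, sub_eq_add_neg] using
    tprod_one_add_ne_zero_of_summable factor_ne_zero (summable_norm_neg_mul_pow x hq)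

theorem hasProd_qPochhammer (x : K) (hq : ‖q‖ < 1) :
    HasProd (fun k : ℕ => 1 - x * q ^ k) (qPochhammer x q) := by
  refine Multipliable.hasProd ?_
  simpa only [sub_eq_add_neg] using
    multipliable_one_add_of_summable (summable_norm_neg_mul_pow x hq)

theorem tendsto_prod_qPochhammer (x : K) (hq : ‖q‖ < 1) :
    Tendsto (fun n => ∏ k ∈ Finset.range n, (1 - x * q ^ k)) atTop (𝓝 (qPochhammer x q)) :=
  (hasProd_qPochhammer x hq).tendsto_prod_nat

theorem prod_mul_qPochhammer (x : K) (hq : ‖q‖ < 1) (n : ℕ) :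
    (∏ k ∈ Finset.range n, (1 - x * q ^ k)) * qPochhammer (x * q ^ n) q = qPochhammer x q := by
  have tail := (tendsto_prod_qPochhammer (x * q ^ n) hq).const_mul
    (∏ k ∈ Finset.range n, (1 - x * q ^ k))
  refine tendsto_nhds_unique tail
    (((tendsto_prod_qPochhammer x hq).comp (tendsto_add_atTop_nat n)).congr fun N => ?_)
  simp only [Function.comp_apply, add_comm N n, Finset.prod_range_add, pow_add, mul_assoc]

theorem one_sub_mul_qPochhammer (x : K) (hq : ‖q‖ < 1) :
    (1 - x) * qPochhammer (x * q) q = qPochhammer x q := by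
  simpa using prod_mul_qPochhammer x hq 1

theorem qPochhammer_one_left (hq : ‖q‖ < 1) : qPochhammer 1 q = 0 := by
  simpa using (one_sub_mul_qPochhammer 1 hq).symm

theorem qPochhammer_eq_prod_residues (x : K) (hq : ‖q‖ < 1) {m : ℕ} (hm : 0 < m) :
    qPochhammer x q = ∏ i ∈ Finset.range m, qPochhammer (x * q ^ i) (q ^ m) := by
  refine (hasProd_qPochhammer x hq).unique (hasProd_of_residues hm fun i _ => ?_)
  refine (hasProd_qPochhammer (x * q ^ i) (norm_pow_lt_one hq hm.ne')).congr_fun fun k => ?_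
  rw [pow_add, pow_mul, mul_assoc, mul_comm (q ^ i)]

theorem tendsto_qPochhammer_pow_succ (hq : ‖q‖ < 1) :
    Tendsto (fun n : ℕ => qPochhammer (q ^ (n + 1)) q) atTop (𝓝 1) := by
  have hne : qPochhammer q q ≠ 0 := qPochhammer_ne_zero hq hq
  have partial_ne_zero (n : ℕ) : ∏ k ∈ Finset.range n, (1 - q * q ^ k) ≠ 0 :=
    left_ne_zero_of_mul (prod_mul_qPochhammer q hq n ▸ hne)
  have quotient := ((tendsto_prod_qPochhammer q hq).inv₀ hne).const_mul (qPochhammer q q)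
  rw [mul_inv_cancel₀ hne] at quotient
  refine quotient.congr fun n => ?_
  rw [← prod_mul_qPochhammer q hq n, pow_succ', mul_right_comm, mul_inv_cancel₀ (partial_ne_zero n),
    one_mul]

theorem qBracket_eq_prod_residues (hq0 : q ≠ 0) (x : K) (hq : ‖q‖ < 1) {m : ℕ} (hm : 0 < m) :
    qBracket x q = ∏ i ∈ Finset.range m, qBracket (x * q ^ i) (q ^ m) := by
  simp only [qBracket, Finset.prod_mul_distrib]
  rw [qPochhammer_eq_prod_residues x hq hm, qPochhammer_eq_prod_residues (q / x) hq hm,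
    ← Finset.prod_range_reflect fun i => qPochhammer (q / x * q ^ i) (q ^ m)]
  congr 1
  refine Finset.prod_congr rfl fun i hi => ?_
  obtain ⟨k, rfl⟩ := Nat.exists_eq_add_of_lt (Finset.mem_range.1 hi)
  rw [show i + k + 1 - 1 - i = k by lia, pow_add, pow_add, pow_one]
  congr 1
  field_simp

end QPochhammer

section JacobiTripleProduct

variable {K : Type*} [NormedField K]

theorem summable_pow_sq_mul_pow {r : ℝ} (hr0 : 0 < r) (hr : r < 1) {c : ℝ} (hc : 0 < c) :
    Summable fun n : ℕ => r ^ (n ^ 2) * c ^ n := by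
  have hpos (n : ℕ) : 0 < r ^ (n ^ 2) * c ^ n := by positivity
  have ratio (n : ℕ) :
      ‖r ^ ((n + 1) ^ 2) * c ^ (n + 1)‖ / ‖r ^ (n ^ 2) * c ^ n‖ = (r ^ 2) ^ n * (r * c) := by
    rw [Real.norm_of_nonneg (hpos _).le, Real.norm_of_nonneg (hpos _).le, div_eq_iff (hpos n).ne']
    ring
  refine summable_of_ratio_test_tendsto_lt_one (l := 0) one_pos
    (Eventually.of_forall fun n => (hpos n).ne') ?_
  simp_rw [ratio]
  simpa using (tendsto_pow_atTop_nhds_zero_of_lt_one (sq_nonneg r)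
    (pow_lt_one₀ hr0.le hr two_ne_zero)).mul_const (r * c)

theorem summable_zpow_sq_mul_zpow {r : ℝ} (hr0 : 0 < r) (hr : r < 1) {c : ℝ} (hc : 0 < c) :
    Summable fun n : ℤ => r ^ (n ^ 2) * c ^ n := by
  refine Summable.of_nat_of_neg ?_ ?_
  · exact_mod_cast summable_pow_sq_mul_pow hr0 hr hc
  · simp only [neg_sq, zpow_neg, ← inv_zpow]
    exact_mod_cast summable_pow_sq_mul_pow hr0 hr (inv_pos.2 hc)

/-- The term `(-1) ^ n s ^ (n ^ 2) w ^ n` of Jacobi's theta series; `s` is the nome. -/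
noncomputable def thetaTerm (s w : K) (n : ℤ) : K := s ^ (n ^ 2) * (-w) ^ n

variable {s w : K}

theorem summable_norm_thetaTerm (hs0 : s ≠ 0) (hs : ‖s‖ < 1) (hw : w ≠ 0) :
    Summable fun n => ‖thetaTerm s w n‖ := by
  simpa [thetaTerm] using summable_zpow_sq_mul_zpow (norm_pos_iff.2 hs0) hs (norm_pos_iff.2 hw)

theorem thetaTerm_add (hs0 : s ≠ 0) (hw : w ≠ 0) (r n : ℤ) :
    thetaTerm s w (r + n) = thetaTerm s w r * thetaTerm s (w * s ^ (2 * r)) n := by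
  simp only [thetaTerm, ← neg_mul, zpow_add₀ (neg_ne_zero.2 hw), mul_zpow, ← zpow_mul,
    show (r + n) ^ 2 = r ^ 2 + n ^ 2 + 2 * r * n by ring, zpow_add₀ hs0]
  ring

theorem thetaTerm_add_one (hs0 : s ≠ 0) (hw : w ≠ 0) (n : ℤ) :
    thetaTerm s w (n + 1) = -(w * s * (s ^ n) ^ 2) * thetaTerm s w n := by
  rw [thetaTerm_add hs0 hw]
  simp only [thetaTerm, zpow_one, one_pow, two_mul, zpow_add₀ hs0]
  ring

theorem thetaTerm_sub_one (hs0 : s ≠ 0) (hw : w ≠ 0) (n : ℤ) :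
    thetaTerm s w (n - 1) = -(s / (w * (s ^ n) ^ 2)) * thetaTerm s w n := by
  have hsn : s ^ n ≠ 0 := zpow_ne_zero n hs0
  have h := thetaTerm_add_one hs0 hw (n - 1)
  rw [sub_add_cancel, zpow_sub_one₀ hs0] at h
  rw [h]
  field_simp

/-- The term of the finite form of Jacobi's triple product, in which `n` factors of each of the
two products in `w` are present. The factor multiplying `thetaTerm s w j` vanishes for `n < |j|`
and tends to `1` as `n → ∞`. -/
noncomputable def finiteThetaTerm (s w : K) (n : ℕ) (j : ℤ) : K :=
  thetaTerm s w j * (qPochhammer ((s ^ 2) ^ (n + 1 - j : ℤ)) (s ^ 2) *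
    qPochhammer ((s ^ 2) ^ (n + 1 + j : ℤ)) (s ^ 2))

theorem norm_finiteThetaTerm_le {C : ℝ} (hC : ∀ m : ℤ, ‖qPochhammer ((s ^ 2) ^ m) (s ^ 2)‖ ≤ C)
    (n : ℕ) (j : ℤ) : ‖finiteThetaTerm s w n j‖ ≤ ‖thetaTerm s w j‖ * (C * C) := by
  have hC0 : 0 ≤ C := (norm_nonneg _).trans (hC 0)
  rw [finiteThetaTerm, norm_mul, norm_mul]
  gcongr <;> exact hC _

variable [CompleteSpace K]

theorem qPochhammer_zpow_of_nonpos {q : K} (hq0 : q ≠ 0) (hq : ‖q‖ < 1) {m : ℤ} (hm : m ≤ 0) :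
    qPochhammer (q ^ m) q = 0 := by
  obtain ⟨n, rfl⟩ := Int.exists_eq_neg_ofNat hm
  rw [← prod_mul_qPochhammer _ hq n, zpow_neg, zpow_natCast,
    inv_mul_cancel₀ (pow_ne_zero n hq0), qPochhammer_one_left hq, mul_zero]

theorem qPochhammer_zpow_step {q : K} (hq0 : q ≠ 0) (hq : ‖q‖ < 1) (m : ℤ) :
    qPochhammer (q ^ m) q = (1 - q ^ m) * qPochhammer (q ^ (m + 1)) q := by
  rw [zpow_add_one₀ hq0, one_sub_mul_qPochhammer _ hq]

theorem tendsto_qPochhammer_zpow {q : K} (hq : ‖q‖ < 1) :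
    Tendsto (fun m : ℤ => qPochhammer (q ^ m) q) atTop (𝓝 1) := by
  have toNat_atTop : Tendsto (fun m : ℤ => (m - 1).toNat) atTop atTop := by
    refine tendsto_atTop.2 fun b => ?_
    filter_upwards [eventually_ge_atTop (b + 1 : ℤ)] with m hm
    lia
  refine ((tendsto_qPochhammer_pow_succ hq).comp toNat_atTop).congr' ?_
  filter_upwards [eventually_ge_atTop 1] with m hm
  simp only [Function.comp_apply, ← zpow_natCast]
  congr 2
  lia

theorem exists_norm_qPochhammer_zpow_le {q : K} (hq0 : q ≠ 0) (hq : ‖q‖ < 1) :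
    ∃ C : ℝ, ∀ m : ℤ, ‖qPochhammer (q ^ m) q‖ ≤ C := by
  obtain ⟨C, hC⟩ := (tendsto_qPochhammer_pow_succ hq).norm.bddAbove_range
  have hC0 : 0 ≤ C := (norm_nonneg _).trans (hC ⟨0, rfl⟩)
  refine ⟨C, fun m => ?_⟩
  rcases le_or_gt m 0 with hm | hm
  · simpa [qPochhammer_zpow_of_nonpos hq0 hq hm] using hC0
  · obtain ⟨n, rfl⟩ : ∃ n : ℕ, m = (n + 1 : ℕ) := ⟨(m - 1).toNat, by lia⟩
    exact hC ⟨n, by simp only [zpow_natCast]⟩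

theorem finiteThetaTerm_zero (hs0 : s ≠ 0) (hs : ‖s‖ < 1) (j : ℤ) :
    finiteThetaTerm s w 0 j = if j = 0 then qPochhammer (s ^ 2) (s ^ 2) ^ 2 else 0 := by
  have vanish {m : ℤ} (hm : m ≤ 0) : qPochhammer ((s ^ 2) ^ m) (s ^ 2) = 0 :=
    qPochhammer_zpow_of_nonpos (pow_ne_zero 2 hs0) (norm_pow_lt_one hs two_ne_zero) hm
  rcases lt_trichotomy j 0 with hj | rfl | hj
  · simp [finiteThetaTerm, hj.ne, vanish (m := 1 + j) (by lia)]
  · simp [finiteThetaTerm, thetaTerm, sq (qPochhammer _ _)]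
  · simp [finiteThetaTerm, hj.ne', vanish (m := 1 - j) (by lia)]

theorem finiteThetaTerm_succ (hs0 : s ≠ 0) (hs : ‖s‖ < 1) (hw : w ≠ 0) (n : ℕ) (j : ℤ) :
    (1 - s ^ (4 * n + 2)) * (1 - s ^ (4 * n + 4)) * finiteThetaTerm s w (n + 1) j =
      (1 + s ^ (4 * n + 2)) * finiteThetaTerm s w n j
        - w * s ^ (2 * n + 1) * finiteThetaTerm s w n (j - 1)
        - w⁻¹ * s ^ (2 * n + 1) * finiteThetaTerm s w n (j + 1) := by
  have step := qPochhammer_zpow_step (pow_ne_zero 2 hs0) (norm_pow_lt_one hs two_ne_zero)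
  have sq_zpow (m : ℤ) : (s ^ 2) ^ m = (s ^ m) ^ 2 := mod_cast zpow_comm s 2 m
  simp only [finiteThetaTerm, thetaTerm_add_one hs0 hw, thetaTerm_sub_one hs0 hw, Nat.cast_add,
    Nat.cast_one, show (n + 1 - (j - 1) : ℤ) = n + 1 + 1 - j by ring,
    show (n + 1 + (j + 1) : ℤ) = n + 1 + 1 + j by ring]
  rw [step (n + 1 - j), step (n + 1 + j), step (n + 1 + (j - 1)), step (n + 1 - (j + 1)),
    show (n + 1 + (j - 1) + 1 : ℤ) = n + 1 + j by ring,
    show (n + 1 - (j + 1) + 1 : ℤ) = n + 1 - j by ring, step (n + 1 - j), step (n + 1 + j),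
    show (n + 1 - j + 1 : ℤ) = n + 1 + 1 - j by ring,
    show (n + 1 + j + 1 : ℤ) = n + 1 + 1 + j by ring]
  generalize qPochhammer ((s ^ 2) ^ (n + 1 + 1 - j : ℤ)) (s ^ 2) = A
  generalize qPochhammer ((s ^ 2) ^ (n + 1 + 1 + j : ℤ)) (s ^ 2) = B
  generalize thetaTerm s w j = T
  have hsj : s ^ j ≠ 0 := zpow_ne_zero j hs0
  simp only [sq_zpow, zpow_add₀ hs0, zpow_sub₀ hs0, zpow_one, zpow_natCast,
    show s ^ (4 * n + 2) = (s ^ n) ^ 4 * s ^ 2 by ring,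
    show s ^ (4 * n + 4) = (s ^ n) ^ 4 * s ^ 4 by ring,
    show s ^ (2 * n + 1) = (s ^ n) ^ 2 * s by ring]
  field_simp
  ring

theorem hasSum_finiteThetaTerm (hs0 : s ≠ 0) (hs : ‖s‖ < 1) (hw : w ≠ 0) (n : ℕ) :
    HasSum (finiteThetaTerm s w n)
      (qPochhammer (s ^ 2) (s ^ 2) * qPochhammer ((s ^ 2) ^ (2 * n + 1)) (s ^ 2) *
        ((∏ k ∈ Finset.range n, (1 - w * s * (s ^ 2) ^ k)) *
          ∏ k ∈ Finset.range n, (1 - s / w * (s ^ 2) ^ k))) := by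
  induction n with
  | zero =>
    simpa [← sq] using (hasSum_ite_eq (0 : ℤ) (qPochhammer (s ^ 2) (s ^ 2) ^ 2)).congr_fun
      (finiteThetaTerm_zero hs0 hs)
  | succ n ih =>
    have hq : ‖s ^ 2‖ < 1 := norm_pow_lt_one hs two_ne_zero
    have coeff_ne_zero : (1 - s ^ (4 * n + 2)) * (1 - s ^ (4 * n + 4)) ≠ 0 := mul_ne_zero
      (one_sub_ne_zero_of_norm_lt_one (norm_pow_lt_one hs (by lia)))
      (one_sub_ne_zero_of_norm_lt_one (norm_pow_lt_one hs (by lia)))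
    have shift_left := (Equiv.subRight (1 : ℤ)).hasSum_iff.2 ih
    have shift_right := (Equiv.addRight (1 : ℤ)).hasSum_iff.2 ih
    have recurrence := (((ih.mul_left (1 + s ^ (4 * n + 2))).sub
      (shift_left.mul_left (w * s ^ (2 * n + 1)))).sub
      (shift_right.mul_left (w⁻¹ * s ^ (2 * n + 1)))).congr_fun (finiteThetaTerm_succ hs0 hs hw n)
    have peel (m : ℕ) :
        qPochhammer ((s ^ 2) ^ m) (s ^ 2) =
          (1 - (s ^ 2) ^ m) * qPochhammer ((s ^ 2) ^ (m + 1)) (s ^ 2) := by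
      rw [pow_succ (s ^ 2) m, one_sub_mul_qPochhammer _ hq]
    refine (hasSum_mul_left_iff coeff_ne_zero).1 ?_
    convert recurrence using 1
    · rfl
    rw [Finset.prod_range_succ, Finset.prod_range_succ, peel (2 * n + 1), peel (2 * n + 1 + 1),
      show 2 * (n + 1) + 1 = 2 * n + 1 + 1 + 1 by ring]
    field_simp
    ring

theorem tendsto_finiteThetaTerm (hs : ‖s‖ < 1) (w : K) (j : ℤ) :
    Tendsto (fun n => finiteThetaTerm s w n j) atTop (𝓝 (thetaTerm s w j)) := by
  have natCast_add (i : ℤ) : Tendsto (fun n : ℕ => (n : ℤ) + i) atTop atTop :=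
    tendsto_natCast_atTop_atTop.atTop_add tendsto_const_nhds
  have factor := tendsto_qPochhammer_zpow (norm_pow_lt_one hs two_ne_zero)
  simpa only [finiteThetaTerm, Function.comp_apply, ← add_sub_assoc, ← add_assoc, mul_one] using
    ((factor.comp (natCast_add (1 - j))).mul (factor.comp (natCast_add (1 + j)))).const_mul
      (thetaTerm s w j)

theorem hasSum_thetaTerm (hs0 : s ≠ 0) (hs : ‖s‖ < 1) (hw : w ≠ 0) :
    HasSum (thetaTerm s w)
      (qPochhammer (s ^ 2) (s ^ 2) *
        (qPochhammer (w * s) (s ^ 2) * qPochhammer (s / w) (s ^ 2))) := by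
  have hq : ‖s ^ 2‖ < 1 := norm_pow_lt_one hs two_ne_zero
  have hsum := summable_norm_thetaTerm hs0 hs hw
  obtain ⟨C, hC⟩ := exists_norm_qPochhammer_zpow_le (pow_ne_zero 2 hs0) hq
  have series_limit : Tendsto (fun n => ∑' j, finiteThetaTerm s w n j) atTop
      (𝓝 (∑' j, thetaTerm s w j)) :=
    tendsto_tsum_of_dominated_convergence (hsum.mul_right (C * C)) (tendsto_finiteThetaTerm hs w)
      (Eventually.of_forall fun n j => norm_finiteThetaTerm_le hC n j)
  have tail_limit : Tendsto (fun n => qPochhammer ((s ^ 2) ^ (2 * n + 1)) (s ^ 2)) atTop (𝓝 1) :=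
    (tendsto_qPochhammer_pow_succ hq).comp (tendsto_id.const_mul_atTop' two_pos)
  have product_limit := (tail_limit.const_mul (qPochhammer (s ^ 2) (s ^ 2))).mul
    ((tendsto_prod_qPochhammer (w * s) hq).mul (tendsto_prod_qPochhammer (s / w) hq))
  rw [mul_one] at product_limit
  rw [tendsto_nhds_unique product_limit
    (series_limit.congr fun n => (hasSum_finiteThetaTerm hs0 hs hw n).tsum_eq)]
  exact hsum.of_norm.hasSum

end JacobiTripleProduct

section Theta

variable {K : Type*} [NormedField K]

/-- Jacobi's theta series `∑_{n ∈ ℤ} (-1) ^ n s ^ (n ^ 2) w ^ n`. -/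
noncomputable def theta (s w : K) : K := ∑' n : ℤ, thetaTerm s w n

theorem theta_inv (s w : K) : theta s w⁻¹ = theta s w := by
  rw [theta, ← (Equiv.neg ℤ).tsum_eq]
  simp [theta, thetaTerm, ← inv_neg]

variable {s w : K}

theorem thetaTerm_mul_theta (hs0 : s ≠ 0) (hw : w ≠ 0) (r : ℤ) :
    thetaTerm s w r * theta s (w * s ^ (2 * r)) = theta s w := by
  rw [theta, theta, ← tsum_mul_left, ← (Equiv.addLeft r).tsum_eq (thetaTerm s w)]
  exact tsum_congr fun n => (thetaTerm_add hs0 hw r n).symm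

theorem theta_mul_sq (hs0 : s ≠ 0) (hw : w ≠ 0) : theta s (w * s ^ 2) = -(s * w)⁻¹ * theta s w := by
  rw [← thetaTerm_mul_theta hs0 hw 1]
  simp only [thetaTerm, one_pow, mul_one, zpow_ofNat]
  field_simp

theorem theta_pow_pow_reflect (hs0 : s ≠ 0) {c m n : ℕ} (h : m + n = 2 * c) :
    theta (s ^ c) (s ^ m) = -(s ^ c)⁻¹ * s ^ n * theta (s ^ c) (s ^ n) := by
  have hm : s ^ m = (s ^ n)⁻¹ * (s ^ c) ^ 2 := by
    rw [← pow_mul, eq_inv_mul_iff_mul_eq₀ (pow_ne_zero n hs0), ← pow_add, add_comm, h, mul_comm]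
  rw [hm, theta_mul_sq (pow_ne_zero c hs0) (inv_ne_zero (pow_ne_zero n hs0)), theta_inv]
  field_simp

variable [CompleteSpace K]

theorem theta_eq_mul_qBracket (hs0 : s ≠ 0) (hs : ‖s‖ < 1) (hw : w ≠ 0) :
    theta s w = qPochhammer (s ^ 2) (s ^ 2) * qBracket (w * s) (s ^ 2) := by
  rw [theta, (hasSum_thetaTerm hs0 hs hw).tsum_eq, qBracket, sq, mul_div_mul_right s w hs0]

theorem hasSum_theta (hs0 : s ≠ 0) (hs : ‖s‖ < 1) (hw : w ≠ 0) :
    HasSum (thetaTerm s w) (theta s w) :=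
  (summable_norm_thetaTerm hs0 hs hw).of_norm.hasSum

theorem hasSum_theta_mul_theta (hs0 : s ≠ 0) (hs : ‖s‖ < 1) (hw : w ≠ 0) {v : K} (hv : v ≠ 0) :
    HasSum (fun p : ℤ × ℤ => thetaTerm s w p.1 * thetaTerm s v p.2) (theta s w * theta s v) :=
  (hasSum_theta hs0 hs hw).mul (hasSum_theta hs0 hs hv)
    (summable_mul_of_summable_norm (summable_norm_thetaTerm hs0 hs hw)
      (summable_norm_thetaTerm hs0 hs hv))

end Theta

section Dissection

variable {K : Type*} [NormedField K] {s : K}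

theorem thetaTerm_mul_right (s w : K) (m : ℕ) (k : ℤ) :
    thetaTerm s w (m * k) = thetaTerm (s ^ m ^ 2) (-(-w) ^ m) k := by
  simp only [thetaTerm, neg_neg, mul_pow, zpow_mul, zpow_natCast]
  norm_cast

theorem theta_dissection [CompleteSpace K] (hs0 : s ≠ 0) (hs : ‖s‖ < 1) {w : K} (hw : w ≠ 0)
    (m : ℕ) [NeZero m] :
    theta s w = ∑ r ∈ Finset.range m,
      thetaTerm s w r * theta (s ^ m ^ 2) (-(-(w * s ^ (2 * r))) ^ m) := by
  let e : Fin m × ℤ ≃ ℤ := (Equiv.prodComm _ _).trans (Int.divModEquiv m).symm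
  have he (r : Fin m) (k : ℤ) : e (r, k) = r + m * k := by
    simp [e, Int.divModEquiv_symm_apply, add_comm, mul_comm]
  have inner (r : Fin m) : HasSum (fun k => thetaTerm s w (e (r, k)))
      (thetaTerm s w r * theta (s ^ m ^ 2) (-(-(w * s ^ (2 * r : ℕ))) ^ m)) := by
    have hv : -(-(w * s ^ (2 * r : ℕ))) ^ m ≠ 0 := by simp [hs0, hw]
    have hm : m ^ 2 ≠ 0 := pow_ne_zero 2 (NeZero.ne m)
    refine ((hasSum_theta (pow_ne_zero _ hs0) (norm_pow_lt_one hs hm) hv).mul_left _).congr_fun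
      fun k => ?_
    rw [he, thetaTerm_add hs0 hw, thetaTerm_mul_right]
    norm_cast
  rw [← Fin.sum_univ_eq_sum_range
    fun r => thetaTerm s w r * theta (s ^ m ^ 2) (-(-(w * s ^ (2 * r))) ^ m)]
  exact ((e.hasSum_iff.2 (hasSum_theta hs0 hs hw)).prod_fiberwise inner).unique (hasSum_fintype _)

/-- Coordinates on `ℤ²` adapted to the sublattice of index `j ^ 2 + 1` spanned by the orthogonal
vectors `(j, -1)` and `(1, j)`; the cosets are represented by `(r, 0)` with `0 ≤ r ≤ j ^ 2`. -/
def latticeCosetEquiv (j : ℕ) : Fin (j ^ 2 + 1) × ℤ × ℤ ≃ ℤ × ℤ where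
  toFun p := (p.1 + (j * p.2.1 + p.2.2), j * p.2.2 - p.2.1)
  invFun p :=
    let d := Int.divModEquiv (j ^ 2 + 1) (p.1 + j * p.2)
    (d.2, j * d.1 - p.2, d.1)
  left_inv := by
    rintro ⟨r, a, b⟩
    have h : (r + (j * a + b) + j * (j * b - a) : ℤ) =
        (Int.divModEquiv (j ^ 2 + 1)).symm (b, r) := by
      simp only [Int.divModEquiv_symm_apply, Nat.cast_add, Nat.cast_pow, Nat.cast_one]
      ring
    simp only [h, Equiv.apply_symm_apply, Prod.mk.injEq, true_and, and_true]
    ring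
  right_inv := by
    rintro ⟨m, n⟩
    have h := (Int.divModEquiv (j ^ 2 + 1)).symm_apply_apply (m + j * n)
    generalize hd : Int.divModEquiv (j ^ 2 + 1) (m + j * n) = d at h
    simp only [Int.divModEquiv_symm_apply, Nat.cast_add, Nat.cast_pow, Nat.cast_one] at h
    simp only [hd, Prod.mk.injEq]
    constructor <;> linarith

theorem thetaTerm_mul_thetaTerm_rotate (hs0 : s ≠ 0) {w v : K} (hw : w ≠ 0) (hv : v ≠ 0)
    (j : ℕ) (a b : ℤ) :
    thetaTerm s w (j * a + b) * thetaTerm s v (j * b - a) =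
      thetaTerm (s ^ (j ^ 2 + 1)) ((-w) ^ j / v) a *
        thetaTerm (s ^ (j ^ 2 + 1)) (w * (-v) ^ j) b := by
  have nome : s ^ ((j * a + b) ^ 2) * s ^ ((j * b - a) ^ 2) =
      (s ^ (j ^ 2 + 1)) ^ (a ^ 2) * (s ^ (j ^ 2 + 1)) ^ (b ^ 2) := by
    rw [← zpow_natCast, ← zpow_mul, ← zpow_mul, ← zpow_add₀ hs0, ← zpow_add₀ hs0]
    push_cast
    ring_nf
  have powers : (-w) ^ (j * a + b) * (-v) ^ (j * b - a) =
      (-((-w) ^ j / v)) ^ a * (-(w * (-v) ^ j)) ^ b := by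
    rw [← div_neg, ← neg_mul, div_zpow, mul_zpow, zpow_add₀ (neg_ne_zero.2 hw),
      zpow_sub₀ (neg_ne_zero.2 hv), zpow_mul, zpow_mul, zpow_natCast, zpow_natCast]
    ring
  rw [thetaTerm, thetaTerm, mul_mul_mul_comm, nome, powers, mul_mul_mul_comm]
  rfl

theorem theta_mul_theta_dissection [CompleteSpace K] (hs0 : s ≠ 0) (hs : ‖s‖ < 1) {w v : K}
    (hw : w ≠ 0) (hv : v ≠ 0) (j : ℕ) :
    theta s w * theta s v = ∑ r ∈ Finset.range (j ^ 2 + 1), thetaTerm s w r *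
      (theta (s ^ (j ^ 2 + 1)) ((-(w * s ^ (2 * r))) ^ j / v) *
        theta (s ^ (j ^ 2 + 1)) (w * s ^ (2 * r) * (-v) ^ j)) := by
  have inner (r : Fin (j ^ 2 + 1)) : HasSum
      (fun p => thetaTerm s w (latticeCosetEquiv j (r, p)).1 *
        thetaTerm s v (latticeCosetEquiv j (r, p)).2)
      (thetaTerm s w r *
        (theta (s ^ (j ^ 2 + 1)) ((-(w * s ^ (2 * r : ℕ))) ^ j / v) *
        theta (s ^ (j ^ 2 + 1)) (w * s ^ (2 * r : ℕ) * (-v) ^ j))) := by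
    have hwr : w * s ^ (2 * r : ℕ) ≠ 0 := mul_ne_zero hw (pow_ne_zero _ hs0)
    refine ((hasSum_theta_mul_theta (pow_ne_zero _ hs0) (norm_pow_lt_one hs (by simp))
      (div_ne_zero (pow_ne_zero j (neg_ne_zero.2 hwr)) hv)
      (mul_ne_zero hwr (pow_ne_zero j (neg_ne_zero.2 hv)))).mul_left _).congr_fun fun p => ?_
    rw [← thetaTerm_mul_thetaTerm_rotate hs0 hwr hv]
    simp only [latticeCosetEquiv, Equiv.coe_fn_mk]
    rw [thetaTerm_add hs0 hw, mul_assoc]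
    norm_cast
  rw [← Fin.sum_univ_eq_sum_range fun r => thetaTerm s w r *
      (theta (s ^ (j ^ 2 + 1)) ((-(w * s ^ (2 * r))) ^ j / v) *
        theta (s ^ (j ^ 2 + 1)) (w * s ^ (2 * r) * (-v) ^ j))]
  exact (((latticeCosetEquiv j).hasSum_iff.2
    (hasSum_theta_mul_theta hs0 hs hw hv)).prod_fiberwise inner).unique (hasSum_fintype _)

end Dissection

section ThreeTermRelation

variable {K : Type*} [NormedField K] [CompleteSpace K]

theorem qBracket_mul_qBracket_div {s x y : K} (hs0 : s ≠ 0) (hs : ‖s‖ < 1) (hx : x ≠ 0)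
    (hy : y ≠ 0) :
    qPochhammer (s ^ 2) (s ^ 2) ^ 2 *
        (qBracket (x * y) (s ^ 2) * qBracket (x / y) (s ^ 2)) =
      x * (x * theta (s ^ 2) (-(x ^ 2 * s ^ 2)) * theta (s ^ 2) (-y ^ 2) -
        theta (s ^ 2) (-x ^ 2) * (y * theta (s ^ 2) (-(y ^ 2 * s ^ 2)))) := by
  have hw : x * y / s ≠ 0 := div_ne_zero (mul_ne_zero hx hy) hs0
  have hv : x / y / s ≠ 0 := div_ne_zero (div_ne_zero hx hy) hs0
  have shift : theta (s ^ 2) (-(x ^ 2 * s ^ 2)) = (x ^ 2)⁻¹ * theta (s ^ 2) (-(x / s) ^ 2) := by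
    rw [show -(x ^ 2 * s ^ 2) = -(x / s) ^ 2 * (s ^ 2) ^ 2 by field_simp,
      theta_mul_sq (pow_ne_zero 2 hs0) (neg_ne_zero.2 (pow_ne_zero 2 (div_ne_zero hx hs0)))]
    field_simp
  calc _ = theta s (x * y / s) * theta s (x / y / s) := by
        rw [theta_eq_mul_qBracket hs0 hs hw, theta_eq_mul_qBracket hs0 hs hv,
          div_mul_cancel₀ _ hs0, div_mul_cancel₀ _ hs0]
        ring
    _ = theta (s ^ 2) (-y ^ 2) * theta (s ^ 2) (-(x / s) ^ 2) -
        x * y * (theta (s ^ 2) (-(y ^ 2 * s ^ 2)) * theta (s ^ 2) (-x ^ 2)) := by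
        have hmul : x * y / s * s ^ 2 * (x / y / s) = x ^ 2 := by field_simp
        rw [theta_mul_theta_dissection hs0 hs hw hv 1, one_pow, Finset.sum_range_succ,
          Finset.sum_range_one]
        simp only [thetaTerm, Nat.cast_zero, Nat.cast_one, zpow_zero, zpow_one, one_pow, pow_one,
          pow_zero, mul_zero, mul_one, zero_pow two_ne_zero, one_add_one_eq_two, mul_neg, hmul,
          show -(x * y / s) / (x / y / s) = -y ^ 2 by field_simp,
          show -(x * y / s * s ^ 2) / (x / y / s) = -(y ^ 2 * s ^ 2) by field_simp,
          show x * y / s * (x / y / s) = (x / s) ^ 2 by field_simp, mul_div_cancel₀ _ hs0]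
        ring
    _ = _ := by
        rw [shift]
        field_simp

/- `qBracket_mul_qBracket_div` exhibits `[xy][x/y]/x` as a `2 × 2` minor, so this is the Plücker
relation between the minors of a `2 × 4` matrix. -/
theorem qBracket_three_term {s x y u v : K} (hs0 : s ≠ 0) (hs : ‖s‖ < 1) (hx : x ≠ 0) (hy : y ≠ 0)
    (hu : u ≠ 0) (hv : v ≠ 0) :
    y * (qBracket (x * y) (s ^ 2) * qBracket (x / y) (s ^ 2) *
        (qBracket (u * v) (s ^ 2) * qBracket (u / v) (s ^ 2))) +
      u * (qBracket (x * v) (s ^ 2) * qBracket (x / v) (s ^ 2) *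
        (qBracket (y * u) (s ^ 2) * qBracket (y / u) (s ^ 2))) =
      u * (qBracket (x * u) (s ^ 2) * qBracket (x / u) (s ^ 2) *
        (qBracket (y * v) (s ^ 2) * qBracket (y / v) (s ^ 2))) := by
  have hq : ‖s ^ 2‖ < 1 := norm_pow_lt_one hs two_ne_zero
  have hne : qPochhammer (s ^ 2) (s ^ 2) ^ 4 ≠ 0 := pow_ne_zero 4 (qPochhammer_ne_zero hq hq)
  have minor {a b : K} (ha : a ≠ 0) (hb : b ≠ 0) := qBracket_mul_qBracket_div hs0 hs ha hb
  have distribute (c A B : K) : qPochhammer (s ^ 2) (s ^ 2) ^ 4 * (c * (A * B)) =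
      c * ((qPochhammer (s ^ 2) (s ^ 2) ^ 2 * A) * (qPochhammer (s ^ 2) (s ^ 2) ^ 2 * B)) := by
    ring
  refine mul_left_cancel₀ hne ?_
  simp only [mul_add, distribute, minor hx hy, minor hx hu, minor hx hv, minor hy hu, minor hy hv,
    minor hu hv]
  ring

end ThreeTermRelation

section BracketTen

variable {K : Type*} [NormedField K] {Q : K}

/-- The theta product `[Q ^ a; Q ^ 10]` to the modulus ten. -/
noncomputable def bracketTen (Q : K) (a : ℕ) : K := qBracket (Q ^ a) (Q ^ 10)

theorem bracketTen_eq (h0 : Q ≠ 0) {a : ℕ} (ha : a ≤ 10) :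
    bracketTen Q a = qPochhammer (Q ^ a) (Q ^ 10) * qPochhammer (Q ^ (10 - a)) (Q ^ 10) := by
  rw [bracketTen, qBracket, pow_sub₀ Q h0 ha, div_eq_mul_inv]

theorem bracketTen_sub (h0 : Q ≠ 0) {a : ℕ} (ha : a ≤ 10) :
    bracketTen Q (10 - a) = bracketTen Q a := by
  rw [bracketTen, pow_sub₀ Q h0 ha, ← div_eq_mul_inv, qBracket_div_left (pow_ne_zero 10 h0),
    bracketTen]

theorem bracketTen_five (h0 : Q ≠ 0) : bracketTen Q 5 = qPochhammer (Q ^ 5) (Q ^ 10) ^ 2 := by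
  rw [bracketTen_eq h0 (by simp), sq]

theorem bracketTen_six (h0 : Q ≠ 0) : bracketTen Q 6 = bracketTen Q 4 :=
  bracketTen_sub h0 (a := 4) (by simp)

theorem bracketTen_seven (h0 : Q ≠ 0) : bracketTen Q 7 = bracketTen Q 3 :=
  bracketTen_sub h0 (a := 3) (by simp)

theorem bracketTen_eight (h0 : Q ≠ 0) : bracketTen Q 8 = bracketTen Q 2 :=
  bracketTen_sub h0 (a := 2) (by simp)

theorem bracketTen_nine (h0 : Q ≠ 0) : bracketTen Q 9 = bracketTen Q 1 :=
  bracketTen_sub h0 (a := 1) (by simp)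

variable [CompleteSpace K]

theorem bracketTen_ne_zero (h0 : Q ≠ 0) (h1 : ‖Q‖ < 1) {a : ℕ} (ha : 0 < a) (ha' : a < 10) :
    bracketTen Q a ≠ 0 := by
  have h10 : ‖Q ^ 10‖ < 1 := norm_pow_lt_one h1 (by simp)
  rw [bracketTen_eq h0 ha'.le]
  exact mul_ne_zero (qPochhammer_ne_zero h10 (norm_pow_lt_one h1 ha.ne'))
    (qPochhammer_ne_zero h10 (norm_pow_lt_one h1 (by lia)))

theorem bracketTen_three_term (h0 : Q ≠ 0) (h1 : ‖Q‖ < 1) {a b c d : ℕ} (hab : b ≤ a)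
    (hbc : c ≤ b) (hcd : d ≤ c) :
    Q ^ b * (bracketTen Q (a + b) * bracketTen Q (a - b) *
        (bracketTen Q (c + d) * bracketTen Q (c - d))) +
      Q ^ c * (bracketTen Q (a + d) * bracketTen Q (a - d) *
        (bracketTen Q (b + c) * bracketTen Q (b - c))) =
      Q ^ c * (bracketTen Q (a + c) * bracketTen Q (a - c) *
        (bracketTen Q (b + d) * bracketTen Q (b - d))) := by
  have hne (n : ℕ) : Q ^ n ≠ 0 := pow_ne_zero n h0
  have h := qBracket_three_term (hne 5) (norm_pow_lt_one h1 (by simp)) (hne a) (hne b) (hne c)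
    (hne d)
  have div_pow {m n : ℕ} (hmn : n ≤ m) : Q ^ m / Q ^ n = Q ^ (m - n) := by
    rw [pow_sub₀ Q h0 hmn, div_eq_mul_inv]
  simpa only [bracketTen, ← pow_mul, ← pow_add, div_pow hab, div_pow hbc, div_pow hcd,
    div_pow (hbc.trans hab), div_pow (hcd.trans hbc), div_pow ((hcd.trans hbc).trans hab)] using h

theorem bracketTen_two_sq_mul_four_sq (h0 : Q ≠ 0) (h1 : ‖Q‖ < 1) :
    bracketTen Q 2 ^ 2 * bracketTen Q 4 ^ 2 =
      bracketTen Q 5 ^ 2 * bracketTen Q 1 * bracketTen Q 3 +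
        Q * bracketTen Q 1 ^ 2 * bracketTen Q 3 ^ 2 := by
  have h := bracketTen_three_term h0 h1 (a := 4) (b := 3) (c := 2) (d := 1)
    (by simp) (by simp) (by simp)
  simp only [Nat.reduceAdd, Nat.reduceSub, bracketTen_six h0, bracketTen_seven h0] at h
  refine mul_left_cancel₀ (pow_ne_zero 2 h0) ?_
  linear_combination -h

theorem bracketTen_two_sq_mul_three_mul_five (h0 : Q ≠ 0) (h1 : ‖Q‖ < 1) :
    bracketTen Q 2 ^ 2 * bracketTen Q 3 * bracketTen Q 5 =
      bracketTen Q 1 * bracketTen Q 3 * bracketTen Q 4 ^ 2 +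
        Q * bracketTen Q 1 ^ 2 * bracketTen Q 2 * bracketTen Q 4 := by
  have h := bracketTen_three_term h0 h1 (a := 4) (b := 2) (c := 1) (d := 0)
    (by simp) (by simp) (by simp)
  simp only [Nat.reduceAdd, Nat.reduceSub, bracketTen_six h0] at h
  refine mul_left_cancel₀ (pow_ne_zero 1 h0) ?_
  linear_combination -h

theorem bracketTen_two_mul_three_sq_mul_four (h0 : Q ≠ 0) (h1 : ‖Q‖ < 1) :
    bracketTen Q 2 * bracketTen Q 3 ^ 2 * bracketTen Q 4 =
      bracketTen Q 1 * bracketTen Q 4 ^ 2 * bracketTen Q 5 +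
        Q * bracketTen Q 1 * bracketTen Q 2 ^ 2 * bracketTen Q 3 := by
  have h := bracketTen_three_term h0 h1 (a := 4) (b := 3) (c := 2) (d := 0)
    (by simp) (by simp) (by simp)
  simp only [Nat.reduceAdd, Nat.reduceSub, bracketTen_six h0, bracketTen_seven h0] at h
  refine mul_left_cancel₀ (pow_ne_zero 2 h0) ?_
  linear_combination -h

theorem bracketTen_three_sq_mul_four_sq (h0 : Q ≠ 0) (h1 : ‖Q‖ < 1) :
    bracketTen Q 3 ^ 2 * bracketTen Q 4 ^ 2 =
      bracketTen Q 2 * bracketTen Q 4 * bracketTen Q 5 ^ 2 +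
        Q ^ 2 * bracketTen Q 1 ^ 2 * bracketTen Q 2 ^ 2 := by
  have h := bracketTen_three_term h0 h1 (a := 5) (b := 3) (c := 1) (d := 0)
    (by simp) (by simp) (by simp)
  simp only [Nat.reduceAdd, Nat.reduceSub, bracketTen_six h0, bracketTen_eight h0] at h
  refine mul_left_cancel₀ (pow_ne_zero 1 h0) ?_
  linear_combination -h

theorem theta_pow_five_pow (h0 : Q ≠ 0) (h1 : ‖Q‖ < 1) (a : ℕ) :
    theta (Q ^ 5) (Q ^ a) = qPochhammer (Q ^ 10) (Q ^ 10) * bracketTen Q (a + 5) := by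
  rw [theta_eq_mul_qBracket (pow_ne_zero 5 h0) (norm_pow_lt_one h1 (by simp)) (pow_ne_zero a h0),
    bracketTen, ← pow_mul, ← pow_add]

theorem theta_one_sq (h0 : Q ≠ 0) (h1 : ‖Q‖ < 1) :
    theta Q 1 ^ 2 =
      theta (Q ^ 5) 1 ^ 2 - 4 * Q * theta (Q ^ 5) (Q ^ 4) * theta (Q ^ 5) (Q ^ 2) := by
  have h5 : Q ^ 5 ≠ 0 := pow_ne_zero 5 h0
  have period (n : ℕ) :
      theta (Q ^ 5) (Q ^ (n + 10)) = -(Q ^ 5 * Q ^ n)⁻¹ * theta (Q ^ 5) (Q ^ n) := by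
    rw [← theta_mul_sq h5 (pow_ne_zero n h0), ← pow_mul, ← pow_add]
  rw [sq, theta_mul_theta_dissection h0 h1 one_ne_zero one_ne_zero 2]
  simp only [Nat.reducePow, Nat.reduceAdd, Nat.reduceMul, Finset.sum_range_succ,
    Finset.sum_range_zero, thetaTerm, even_two.neg_pow, one_mul, one_pow, mul_one, div_one,
    ← pow_mul]
  norm_num
  rw [theta_pow_pow_reflect h0 (m := 8) (n := 2) rfl, period 2, period 6,
    theta_pow_pow_reflect h0 (m := 6) (n := 4) rfl]
  field_simp
  ring

theorem qPochhammer_pow_ten_split (h0 : Q ≠ 0) (h1 : ‖Q‖ < 1) :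
    qPochhammer Q (Q ^ 2) = bracketTen Q 1 * bracketTen Q 3 * qPochhammer (Q ^ 5) (Q ^ 10) := by
  have h2 : ‖Q ^ 2‖ < 1 := norm_pow_lt_one h1 two_ne_zero
  rw [qPochhammer_eq_prod_residues Q h2 (m := 5) (by simp), bracketTen_eq h0 (by simp),
    bracketTen_eq h0 (by simp)]
  simp only [Finset.prod_range_succ, Finset.prod_range_zero, ← pow_mul, ← pow_succ']
  simp only [Nat.reduceMul, Nat.reduceAdd, Nat.reduceSub]
  ring

theorem qPochhammer_sq_pow_ten_split (h0 : Q ≠ 0) (h1 : ‖Q‖ < 1) :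
    qPochhammer (Q ^ 2) (Q ^ 2) =
      bracketTen Q 2 * bracketTen Q 4 * qPochhammer (Q ^ 10) (Q ^ 10) := by
  have h2 : ‖Q ^ 2‖ < 1 := norm_pow_lt_one h1 two_ne_zero
  rw [qPochhammer_eq_prod_residues (Q ^ 2) h2 (m := 5) (by simp), bracketTen_eq h0 (by simp),
    bracketTen_eq h0 (by simp)]
  simp only [Finset.prod_range_succ, Finset.prod_range_zero, ← pow_mul, ← pow_add]
  simp only [Nat.reduceMul, Nat.reduceAdd, Nat.reduceSub]
  ring

theorem bracketTen_five_sq_sub (h0 : Q ≠ 0) (h1 : ‖Q‖ < 1) :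
    bracketTen Q 5 ^ 2 - 4 * Q * bracketTen Q 1 * bracketTen Q 3 =
      bracketTen Q 1 ^ 4 * bracketTen Q 2 ^ 2 * bracketTen Q 3 ^ 4 * bracketTen Q 4 ^ 2 *
        bracketTen Q 5 ^ 2 := by
  have h10 : ‖Q ^ 10‖ < 1 := norm_pow_lt_one h1 (by simp)
  have theta_one : theta (Q ^ 5) 1 = qPochhammer (Q ^ 10) (Q ^ 10) * bracketTen Q 5 := by
    simpa using theta_pow_five_pow h0 h1 0
  have h := theta_one_sq h0 h1
  rw [theta_one, theta_pow_five_pow h0 h1, theta_pow_five_pow h0 h1, bracketTen_nine h0,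
    bracketTen_seven h0, theta_eq_mul_qBracket h0 h1 one_ne_zero, one_mul, qBracket,
    sq Q, mul_div_cancel_right₀ Q h0, ← sq Q, qPochhammer_pow_ten_split h0 h1,
    qPochhammer_sq_pow_ten_split h0 h1] at h
  refine mul_left_cancel₀ (pow_ne_zero 2 (qPochhammer_ne_zero h10 h10)) ?_
  rw [bracketTen_five h0] at h ⊢
  linear_combination -h

theorem qPochhammer_pow_five_div (h0 : Q ≠ 0) (h1 : ‖Q‖ < 1) :
    qPochhammer Q (Q ^ 2) ^ 5 / qPochhammer (Q ^ 5) (Q ^ 10) =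
      bracketTen Q 1 ^ 5 * bracketTen Q 3 ^ 5 * bracketTen Q 5 ^ 2 := by
  have hne : qPochhammer (Q ^ 5) (Q ^ 10) ≠ 0 :=
    qPochhammer_ne_zero (norm_pow_lt_one h1 (by simp)) (norm_pow_lt_one h1 (by simp))
  rw [qPochhammer_pow_ten_split h0 h1, bracketTen_five h0]
  field_simp

end BracketTen

section RogersRamanujan

theorem fifthRoot_pow_five (t : ℝ) : fifthRoot t ^ 5 = t := by
  rw [fifthRoot, mul_pow, ← Real.rpow_natCast (|t| ^ _), ← Real.rpow_mul (abs_nonneg t)]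
  norm_num
  rcases lt_trichotomy t 0 with ht | rfl | ht
  · rw [Real.sign_of_neg ht, abs_of_neg ht]
    ring
  · simp
  · rw [Real.sign_of_pos ht, abs_of_pos ht]
    ring

theorem fifthRoot_ne_zero {t : ℝ} (ht : t ≠ 0) : fifthRoot t ≠ 0 :=
  ne_zero_pow (n := 5) (by simp) (by rwa [fifthRoot_pow_five])

theorem fifthRoot_sq (t : ℝ) : fifthRoot (t ^ 2) = fifthRoot t ^ 2 := by
  refine (Odd.pow_inj (n := 5) (by decide)).1 ?_
  rw [fifthRoot_pow_five, ← pow_mul, mul_comm, pow_mul, fifthRoot_pow_five]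

theorem legSym5_five_mul_add (k n : ℕ) : legSym5 (5 * k + n) = legSym5 n := by
  simp [legSym5]

theorem hasProd_one_sub_pow_zpow_legSym5 {t : ℝ} (ht : ‖t‖ < 1) {i : ℕ} (hi : i < 5) :
    HasProd (fun k => (1 - t ^ (5 * k + i + 1)) ^ legSym5 (5 * k + i + 1))
      (qPochhammer (t ^ (i + 1)) (t ^ 5) ^ legSym5 (i + 1)) := by
  have ht5 : ‖t ^ 5‖ < 1 := norm_pow_lt_one ht (by simp)
  have hne : qPochhammer (t ^ (i + 1)) (t ^ 5) ≠ 0 :=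
    qPochhammer_ne_zero ht5 (norm_pow_lt_one ht i.succ_ne_zero)
  have base : HasProd (fun k => 1 - t ^ (5 * k + (i + 1))) (qPochhammer (t ^ (i + 1)) (t ^ 5)) :=
    (hasProd_qPochhammer (t ^ (i + 1)) ht5).congr_fun fun k => by
      rw [pow_add, pow_mul, mul_comm]
  have symbol : legSym5 (i + 1) = 1 ∨ legSym5 (i + 1) = -1 ∨ legSym5 (i + 1) = 0 := by
    interval_cases i <;> decide
  simp only [add_assoc, legSym5_five_mul_add]
  rcases symbol with h | h | h <;> rw [h]
  · simpa only [zpow_one] using base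
  · simpa only [zpow_neg_one] using base.inv₀ hne
  · simpa only [zpow_zero] using hasProd_one

theorem RR_eq_mul_qBracket_div {t : ℝ} (ht0 : t ≠ 0) (ht : ‖t‖ < 1) :
    RR t = fifthRoot t * (qBracket t (t ^ 5) / qBracket (t ^ 2) (t ^ 5)) := by
  have product := hasProd_of_residues (m := 5) (by simp)
    (f := fun n => (1 - t ^ (n + 1)) ^ legSym5 (n + 1))
    (fun i hi => hasProd_one_sub_pow_zpow_legSym5 ht hi)
  rw [RR, product.tprod_eq, qBracket, qBracket, show t ^ 5 / t = t ^ 4 by field_simp,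
    show t ^ 5 / t ^ 2 = t ^ 3 by field_simp]
  simp only [Finset.prod_range_succ, Finset.prod_range_zero, Nat.reduceAdd, zero_add,
    show legSym5 1 = 1 by decide, show legSym5 2 = -1 by decide, show legSym5 3 = -1 by decide,
    show legSym5 4 = 1 by decide, show legSym5 5 = 0 by decide, zpow_one, zpow_neg_one, zpow_zero,
    pow_one]
  field_simp

variable {Q : ℝ}

theorem RR_eq_bracketTen (h0 : Q ≠ 0) (h1 : ‖Q‖ < 1) :
    RR Q = fifthRoot Q * (bracketTen Q 1 * bracketTen Q 4 / (bracketTen Q 2 * bracketTen Q 3)) := by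
  have h5 : ‖Q ^ 5‖ < 1 := norm_pow_lt_one h1 (by simp)
  have split (a : ℕ) : qBracket (Q ^ a) (Q ^ 5) = bracketTen Q a * bracketTen Q (a + 5) := by
    rw [qBracket_eq_prod_residues (pow_ne_zero 5 h0) (Q ^ a) h5 (m := 2) two_pos,
      Finset.prod_range_succ, Finset.prod_range_one]
    simp only [bracketTen, ← pow_mul, ← pow_add, mul_zero, add_zero, mul_one, Nat.reduceMul]
  have split_one := split 1
  rw [pow_one] at split_one
  rw [RR_eq_mul_qBracket_div h0 h1, split_one, split, bracketTen_six h0, bracketTen_seven h0]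

theorem RR_sq_eq_bracketTen (h0 : Q ≠ 0) (h1 : ‖Q‖ < 1) :
    RR (Q ^ 2) = fifthRoot Q ^ 2 * (bracketTen Q 2 / bracketTen Q 4) := by
  rw [RR_eq_mul_qBracket_div (pow_ne_zero 2 h0) (norm_pow_lt_one h1 two_ne_zero), fifthRoot_sq]
  simp only [bracketTen, ← pow_mul]

/-- Ramanujan's parameter `k = R(Q) R(Q ^ 2) ^ 2`, in which `R(Q) ^ 5` and `R(Q ^ 2) ^ 5` are
rational. -/
noncomputable def ramanujanK (Q : ℝ) : ℝ := RR Q * RR (Q ^ 2) ^ 2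

theorem RR_ne_zero (h0 : Q ≠ 0) (h1 : ‖Q‖ < 1) : RR Q ≠ 0 := by
  have hne {a : ℕ} (ha : 0 < a) (ha' : a < 10) := bracketTen_ne_zero h0 h1 ha ha'
  rw [RR_eq_bracketTen h0 h1]
  exact mul_ne_zero (fifthRoot_ne_zero h0) (div_ne_zero
    (mul_ne_zero (hne (by simp) (by simp)) (hne (by simp) (by simp)))
    (mul_ne_zero (hne (by simp) (by simp)) (hne (by simp) (by simp))))

theorem ramanujanK_eq_bracketTen (h0 : Q ≠ 0) (h1 : ‖Q‖ < 1) :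
    ramanujanK Q = Q * bracketTen Q 1 * bracketTen Q 2 / (bracketTen Q 3 * bracketTen Q 4) := by
  have hne {a : ℕ} (ha : 0 < a) (ha' : a < 10) := bracketTen_ne_zero h0 h1 ha ha'
  have b1 : bracketTen Q 1 ≠ 0 := hne (by simp) (by simp)
  have b2 : bracketTen Q 2 ≠ 0 := hne (by simp) (by simp)
  have b3 : bracketTen Q 3 ≠ 0 := hne (by simp) (by simp)
  have b4 : bracketTen Q 4 ≠ 0 := hne (by simp) (by simp)
  rw [ramanujanK, RR_eq_bracketTen h0 h1, RR_sq_eq_bracketTen h0 h1]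
  field_simp
  linear_combination fifthRoot_pow_five Q

theorem RR_sq_mul_one_sub_ramanujanK (h0 : Q ≠ 0) (h1 : ‖Q‖ < 1) :
    RR (Q ^ 2) * (1 - ramanujanK Q) = RR Q ^ 2 * (1 + ramanujanK Q) := by
  have hne {a : ℕ} (ha : 0 < a) (ha' : a < 10) := bracketTen_ne_zero h0 h1 ha ha'
  have b2 : bracketTen Q 2 ≠ 0 := hne (by simp) (by simp)
  have b3 : bracketTen Q 3 ≠ 0 := hne (by simp) (by simp)
  have b4 : bracketTen Q 4 ≠ 0 := hne (by simp) (by simp)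
  have hf : fifthRoot Q ≠ 0 := fifthRoot_ne_zero h0
  rw [RR_eq_bracketTen h0 h1, RR_sq_eq_bracketTen h0 h1, ramanujanK_eq_bracketTen h0 h1]
  field_simp
  linear_combination bracketTen Q 2 ^ 2 * bracketTen Q 3 *
      bracketTen_two_mul_three_sq_mul_four h0 h1 +
    bracketTen Q 1 * bracketTen Q 4 ^ 2 * bracketTen_two_sq_mul_three_mul_five h0 h1

theorem one_add_ramanujanK_ne_zero (h0 : Q ≠ 0) (h1 : ‖Q‖ < 1) : 1 + ramanujanK Q ≠ 0 := by
  intro h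
  have hR := RR_ne_zero (pow_ne_zero 2 h0) (norm_pow_lt_one h1 two_ne_zero)
  have h' := RR_sq_mul_one_sub_ramanujanK h0 h1
  rw [h, mul_zero, mul_eq_zero_iff_left hR] at h'
  linarith

theorem one_sub_ramanujanK_ne_zero (h0 : Q ≠ 0) (h1 : ‖Q‖ < 1) : 1 - ramanujanK Q ≠ 0 := by
  intro h
  have h' := RR_sq_mul_one_sub_ramanujanK h0 h1
  rw [h, mul_zero, zero_eq_mul, or_iff_right (pow_ne_zero 2 (RR_ne_zero h0 h1))] at h'
  linarith

theorem RR_pow_five (h0 : Q ≠ 0) (h1 : ‖Q‖ < 1) :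
    RR Q ^ 5 = ramanujanK Q * (1 - ramanujanK Q) ^ 2 / (1 + ramanujanK Q) ^ 2 := by
  rw [eq_div_iff (pow_ne_zero 2 (one_add_ramanujanK_ne_zero h0 h1))]
  calc RR Q ^ 5 * (1 + ramanujanK Q) ^ 2
      = RR Q * (RR Q ^ 2 * (1 + ramanujanK Q)) ^ 2 := by ring
    _ = RR Q * RR (Q ^ 2) ^ 2 * (1 - ramanujanK Q) ^ 2 := by
        rw [← RR_sq_mul_one_sub_ramanujanK h0 h1]
        ring

theorem RR_sq_pow_five (h0 : Q ≠ 0) (h1 : ‖Q‖ < 1) :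
    RR (Q ^ 2) ^ 5 = ramanujanK Q ^ 2 * (1 + ramanujanK Q) / (1 - ramanujanK Q) := by
  rw [eq_div_iff (one_sub_ramanujanK_ne_zero h0 h1)]
  calc RR (Q ^ 2) ^ 5 * (1 - ramanujanK Q)
      = RR (Q ^ 2) ^ 4 * (RR (Q ^ 2) * (1 - ramanujanK Q)) := by ring
    _ = (RR Q * RR (Q ^ 2) ^ 2) ^ 2 * (1 + ramanujanK Q) := by
        rw [RR_sq_mul_one_sub_ramanujanK h0 h1]
        ring

theorem qPochhammer_pow_five_div_mul_ramanujanK (h0 : Q ≠ 0) (h1 : ‖Q‖ < 1) :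
    qPochhammer Q (Q ^ 2) ^ 5 / qPochhammer (Q ^ 5) (Q ^ 10) *
        (1 + ramanujanK Q - ramanujanK Q ^ 2) =
      1 - 4 * ramanujanK Q - ramanujanK Q ^ 2 := by
  have hne {a : ℕ} (ha : 0 < a) (ha' : a < 10) := bracketTen_ne_zero h0 h1 ha ha'
  have b1 : bracketTen Q 1 ≠ 0 := hne (by simp) (by simp)
  have b3 : bracketTen Q 3 ≠ 0 := hne (by simp) (by simp)
  have b4 : bracketTen Q 4 ≠ 0 := hne (by simp) (by simp)
  have b5 : bracketTen Q 5 ≠ 0 := hne (by simp) (by simp)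
  have parameter : Q * bracketTen Q 1 * bracketTen Q 3 * (1 - ramanujanK Q ^ 2) =
      ramanujanK Q * bracketTen Q 5 ^ 2 := by
    rw [ramanujanK_eq_bracketTen h0 h1]
    field_simp
    linear_combination bracketTen_three_sq_mul_four_sq h0 h1
  have product : bracketTen Q 1 ^ 5 * bracketTen Q 3 ^ 5 * bracketTen Q 5 ^ 2 *
      (bracketTen Q 5 ^ 2 + Q * bracketTen Q 1 * bracketTen Q 3) =
      bracketTen Q 5 ^ 2 - 4 * Q * bracketTen Q 1 * bracketTen Q 3 := by
    rw [bracketTen_five_sq_sub h0 h1]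
    linear_combination -(bracketTen Q 1 ^ 4 * bracketTen Q 3 ^ 4 * bracketTen Q 5 ^ 2) *
      bracketTen_two_sq_mul_four_sq h0 h1
  rw [qPochhammer_pow_five_div h0 h1]
  refine mul_left_cancel₀ (pow_ne_zero 2 b5) ?_
  linear_combination (1 - ramanujanK Q ^ 2) * product -
    (bracketTen Q 1 ^ 5 * bracketTen Q 3 ^ 5 * bracketTen Q 5 ^ 2 + 4) * parameter

end RogersRamanujan

section RootsOfUnity

variable {K : Type*} [CommRing K] {ℓ : ℕ} {z : K}

theorem prod_one_sub_mul_rotate_pow_mul (hz : IsPrimitiveRoot z ℓ) (c q : K) (n : ℕ) :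
    ∏ j ∈ Finset.range ℓ, (1 - c * (z ^ j * q) ^ (ℓ * n)) = (1 - c * (q ^ ℓ) ^ n) ^ ℓ := by
  have factor (j : ℕ) : (z ^ j * q) ^ (ℓ * n) = (q ^ ℓ) ^ n := by
    rw [pow_mul, mul_pow, pow_right_comm, hz.pow_eq_one, one_pow, one_mul]
  simp only [factor, Finset.prod_const, Finset.card_range]

variable [IsDomain K]

theorem prod_sub_pow_mul_eq (hz : IsPrimitiveRoot z ℓ) (hℓ : 0 < ℓ) (x y : K) :
    ∏ j ∈ Finset.range ℓ, (x - z ^ j * y) = x ^ ℓ - y ^ ℓ := by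
  simpa [Polynomial.eval_prod] using
    (congrArg (Polynomial.eval x) (X_pow_sub_C_eq_prod hz hℓ (rfl : y ^ ℓ = y ^ ℓ))).symm

theorem prod_one_sub_mul_rotate_pow_of_coprime (hz : IsPrimitiveRoot z ℓ) (hℓ : 0 < ℓ) {c : K}
    (hc : c ^ ℓ = 1) (q : K) {n : ℕ} (hn : n.Coprime ℓ) :
    ∏ j ∈ Finset.range ℓ, (1 - c * (z ^ j * q) ^ n) = 1 - (q ^ ℓ) ^ n := by
  have h := prod_sub_pow_mul_eq (hz.pow_of_coprime n hn) hℓ 1 (c * q ^ n)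
  rw [one_pow, mul_pow, hc, one_mul, pow_right_comm] at h
  rw [← h]
  refine Finset.prod_congr rfl fun j _ => ?_
  rw [mul_pow, pow_right_comm z j n]
  ring

end RootsOfUnity

theorem qPochhammer_mul_prod_rotate {K : Type*} [NormedField K] [CompleteSpace K] {ℓ : ℕ}
    (hℓ : ℓ.Prime) {z : K} (hz : IsPrimitiveRoot z ℓ) {c q : K} (hc : c ^ ℓ = 1) (hq : ‖q‖ < 1) :
    qPochhammer ((q ^ ℓ) ^ ℓ) ((q ^ ℓ) ^ ℓ) *
        ∏ j ∈ Finset.range ℓ, qPochhammer (c * (z ^ j * q)) (z ^ j * q) =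
      qPochhammer (q ^ ℓ) (q ^ ℓ) * qPochhammer (c * q ^ ℓ) (q ^ ℓ) ^ ℓ := by
  obtain ⟨m, rfl⟩ := Nat.exists_eq_add_one.2 hℓ.pos
  have hp : ‖q ^ (m + 1)‖ < 1 := norm_pow_lt_one hq m.succ_ne_zero
  have norm_z : ‖z‖ = 1 := (pow_eq_one_iff_of_nonneg (norm_nonneg z) m.succ_ne_zero).1 <| by
    rw [← norm_pow, hz.pow_eq_one, norm_one]
  have norm_rotate (j : ℕ) : ‖z ^ j * q‖ < 1 := by simpa [norm_z] using hq
  have rotations := hasProd_prod fun j (_ : j ∈ Finset.range (m + 1)) =>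
    hasProd_qPochhammer (c * (z ^ j * q)) (norm_rotate j)
  have residue (i : ℕ) (hi : i < m + 1) : HasProd
      (fun k => ∏ j ∈ Finset.range (m + 1),
        (1 - c * (z ^ j * q) * (z ^ j * q) ^ ((m + 1) * k + i)))
      (if i < m then qPochhammer ((q ^ (m + 1)) ^ (i + 1)) ((q ^ (m + 1)) ^ (m + 1))
        else qPochhammer (c * q ^ (m + 1)) (q ^ (m + 1)) ^ (m + 1)) := by
    simp only [mul_assoc c, ← pow_succ']
    split_ifs with him
    · refine (hasProd_qPochhammer ((q ^ (m + 1)) ^ (i + 1))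
        (norm_pow_lt_one hp (n := m + 1) m.succ_ne_zero)).congr_fun fun k => ?_
      rw [prod_one_sub_mul_rotate_pow_of_coprime hz hℓ.pos hc]
      · ring
      · rw [add_assoc, Nat.coprime_mul_left_add_left]
        exact (Nat.coprime_of_lt_prime i.succ_ne_zero (by lia) hℓ).symm
    · obtain rfl : i = m := by lia
      refine ((hasProd_qPochhammer (c * q ^ (i + 1)) hp).pow (i + 1)).congr_fun fun k => ?_
      rw [add_assoc, ← mul_add_one, prod_one_sub_mul_rotate_pow_mul hz]
      ring
  rw [rotations.unique (hasProd_of_residues hℓ.pos residue), Finset.prod_range_succ,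
    qPochhammer_eq_prod_residues (q ^ (m + 1)) hp hℓ.pos, Finset.prod_range_succ, if_neg (by simp),
    Finset.prod_congr rfl fun i hi => if_pos (Finset.mem_range.1 hi), ← pow_succ' (q ^ (m + 1))]
  simp only [← pow_succ']
  ring

section QuadPochhammer

variable {K : Type*} [NormedField K]

/-- The product `∏ₖ (1 + a x qᵏ + x² q²ᵏ)`, i.e. `(zx; q)_∞ (z⁻¹x; q)_∞` written without the root
of unity `z` for which `z + z⁻¹ = -a`. For golden `a`, `z` is a primitive fifth root of unity, and
this form keeps the product real. -/
noncomputable def quadPochhammer (a x q : K) : K :=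
  ∏' k : ℕ, (1 + a * (x * q ^ k) + (x * q ^ k) ^ 2)

variable [CompleteSpace K] {q : K}

theorem hasProd_quadPochhammer (a x : K) (hq : ‖q‖ < 1) :
    HasProd (fun k : ℕ => 1 + a * (x * q ^ k) + (x * q ^ k) ^ 2) (quadPochhammer a x q) := by
  have linear := (summable_norm_geometric_of_norm_lt_one hq).mul_left ‖a * x‖
  have quadratic := (summable_norm_geometric_of_norm_lt_one
    (norm_pow_lt_one hq two_ne_zero)).mul_left ‖x ^ 2‖
  have summable : Summable fun k : ℕ => ‖a * (x * q ^ k) + (x * q ^ k) ^ 2‖ := by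
    refine (linear.add quadratic).of_nonneg_of_le (fun k => norm_nonneg _) fun k => ?_
    refine (norm_add_le _ _).trans_eq ?_
    rw [← norm_mul, ← norm_mul]
    ring_nf
  simpa only [quadPochhammer, add_assoc] using (multipliable_one_add_of_summable summable).hasProd

theorem quadPochhammer_eq_mul {a z : K} (hz : z ≠ 0) (ha : z + z⁻¹ = -a) (x : K) (hq : ‖q‖ < 1) :
    quadPochhammer a x q = qPochhammer (z * x) q * qPochhammer (z⁻¹ * x) q := by
  refine (hasProd_quadPochhammer a x hq).unique
    (((hasProd_qPochhammer (z * x) hq).mul (hasProd_qPochhammer (z⁻¹ * x) hq)).congr_fun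
      fun k => ?_)
  linear_combination x * q ^ k * ha - (x * q ^ k) ^ 2 * mul_inv_cancel₀ hz

theorem quadPochhammer_eq_mul_sq (a x : K) (hq : ‖q‖ < 1) :
    quadPochhammer a x q = quadPochhammer a x (q ^ 2) * quadPochhammer a (x * q) (q ^ 2) := by
  have hq2 := norm_pow_lt_one hq two_ne_zero
  refine (hasProd_quadPochhammer a x hq).unique (HasProd.even_mul_odd
    (f := fun k => 1 + a * (x * q ^ k) + (x * q ^ k) ^ 2) ?_ ?_)
  · exact (hasProd_quadPochhammer a x hq2).congr_fun fun k => by simp only [pow_mul]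
  · exact (hasProd_quadPochhammer a (x * q) hq2).congr_fun fun k => by
      simp only [pow_add, pow_mul, pow_one, mul_assoc, mul_comm q]

theorem qPochhammer_mul_quadPochhammer_mul_quadPochhammer {a b : K} (hab : a + b = 1)
    (hmul : a * b = -1) (x : K) (hq : ‖q‖ < 1) :
    qPochhammer x q * quadPochhammer a x q * quadPochhammer b x q =
      qPochhammer (x ^ 5) (q ^ 5) := by
  refine (((hasProd_qPochhammer x hq).mul (hasProd_quadPochhammer a x hq)).mul
    (hasProd_quadPochhammer b x hq)).unique
    ((hasProd_qPochhammer (x ^ 5) (norm_pow_lt_one hq (by simp))).congr_fun fun k => ?_)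
  obtain rfl : b = 1 - a := eq_sub_of_add_eq' hab
  rw [← pow_mul, mul_comm 5 k, pow_mul, ← mul_pow]
  generalize x * q ^ k = y
  linear_combination (y ^ 2 * (1 - y)) * hmul

theorem quadPochhammer_ne_zero {a x : K} (ha : a ^ 2 = a + 1) (hx : ‖x‖ < 1) (hq : ‖q‖ < 1) :
    quadPochhammer a x q ≠ 0 := by
  have product := qPochhammer_mul_quadPochhammer_mul_quadPochhammer (b := 1 - a)
    (add_sub_cancel a 1) (by linear_combination -ha) x hq
  have hne := qPochhammer_ne_zero (norm_pow_lt_one hq (n := 5) (by simp))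
    (norm_pow_lt_one hx (n := 5) (by simp))
  exact right_ne_zero_of_mul (left_ne_zero_of_mul (product ▸ hne))

end QuadPochhammer

section FiveDissection

variable {K : Type*} [NormedField K] [CompleteSpace K] {s z : K}

theorem theta_five_dissection (hs0 : s ≠ 0) (hs : ‖s‖ < 1) (hz : z ^ 5 = 1) :
    theta s (z * s) =
      (1 - z ^ 4) * theta (s ^ 25) (s ^ 5) - s ^ 2 * (z - z ^ 3) * theta (s ^ 25) (s ^ 15) := by
  have hz0 : z ≠ 0 := ne_zero_pow (n := 5) (by simp) (by simp [hz])
  have h25 : s ^ 25 ≠ 0 := pow_ne_zero 25 hs0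
  have vanish : theta (s ^ 25) (s ^ 25) = 0 := by
    rw [theta_eq_mul_qBracket h25 (norm_pow_lt_one hs (by simp)) h25, qBracket, ← sq,
      div_self (pow_ne_zero 2 h25), qPochhammer_one_left]
    · simp
    · exact norm_pow_lt_one (norm_pow_lt_one hs (by simp)) two_ne_zero
  have argument (r : ℕ) : -(-(z * s * s ^ (2 * r))) ^ 5 = s ^ (5 + 10 * r) := by
    rw [Odd.neg_pow (by decide), neg_neg, mul_pow, mul_pow, hz]
    ring
  rw [theta_dissection hs0 hs (mul_ne_zero hz0 hs0) 5]
  simp only [argument, Finset.sum_range_succ, Finset.sum_range_zero, thetaTerm]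
  norm_num
  rw [vanish, theta_pow_pow_reflect hs0 (m := 35) (n := 15) rfl,
    theta_pow_pow_reflect hs0 (m := 45) (n := 5) rfl]
  field_simp
  ring

theorem qPochhammer_pair_five_dissection (hs0 : s ≠ 0) (hs : ‖s‖ < 1) (hz : z ^ 5 = 1)
    (hz1 : z ≠ 1) :
    qPochhammer (s ^ 2) (s ^ 2) * (qPochhammer (z * s ^ 2) (s ^ 2) *
        qPochhammer (z⁻¹ * s ^ 2) (s ^ 2)) =
      qPochhammer (s ^ 50) (s ^ 50) *
        (qBracket (s ^ 20) (s ^ 50) + s ^ 2 * (z ^ 2 + z ^ 3) * qBracket (s ^ 10) (s ^ 50)) := by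
  have hz0 : z ≠ 0 := ne_zero_pow (n := 5) (by simp) (by simp [hz])
  have hinv : z⁻¹ = z ^ 4 := inv_eq_of_mul_eq_one_right (by rw [← hz]; ring)
  have h1 : 1 - z ^ 4 ≠ 0 := fun h => hz1 <| by linear_combination z * h + hz
  have fold {m n : ℕ} (hmn : m + 25 + n = 50) :
      theta (s ^ 25) (s ^ m) = qPochhammer (s ^ 50) (s ^ 50) * qBracket (s ^ n) (s ^ 50) := by
    have hn : s ^ m * s ^ 25 = s ^ 50 / s ^ n := by
      rw [eq_div_iff (pow_ne_zero n hs0), ← pow_add, ← pow_add, hmn]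
    rw [theta_eq_mul_qBracket (pow_ne_zero _ hs0) (norm_pow_lt_one hs (by simp))
      (pow_ne_zero _ hs0), ← pow_mul, hn, qBracket_div_left (pow_ne_zero _ hs0)]
  have left : theta s (z * s) = (1 - z ^ 4) * (qPochhammer (s ^ 2) (s ^ 2) *
      (qPochhammer (z * s ^ 2) (s ^ 2) * qPochhammer (z⁻¹ * s ^ 2) (s ^ 2))) := by
    rw [theta_eq_mul_qBracket hs0 hs (mul_ne_zero hz0 hs0), qBracket, mul_assoc z, ← sq,
      div_mul_cancel_right₀ (pow_ne_zero 2 hs0),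
      ← one_sub_mul_qPochhammer z⁻¹ (norm_pow_lt_one hs two_ne_zero), hinv]
    ring
  refine mul_left_cancel₀ h1 ?_
  rw [← left, theta_five_dissection hs0 hs hz, fold (m := 5) (n := 20) rfl,
    fold (m := 15) (n := 10) rfl]
  linear_combination (z + z ^ 2) * s ^ 2 * qPochhammer (s ^ 50) (s ^ 50) *
    qBracket (s ^ 10) (s ^ 50) * hz

end FiveDissection

section FifthPower

theorem qPochhammer_triple_rotate_dissection {q z : ℂ} (hq0 : q ≠ 0) (hq : ‖q‖ < 1)
    (hz : IsPrimitiveRoot z 5) (j : ℕ) :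
    qPochhammer (z ^ j * q) (z ^ j * q) *
        (qPochhammer (z * (z ^ j * q)) (z ^ j * q) * qPochhammer (z⁻¹ * (z ^ j * q)) (z ^ j * q)) =
      qPochhammer ((q ^ 5) ^ 5) ((q ^ 5) ^ 5) *
        (qBracket ((q ^ 5) ^ 2) ((q ^ 5) ^ 5) -
          z ^ j * (-(q * (z ^ 2 + z ^ 3)) * qBracket (q ^ 5) ((q ^ 5) ^ 5))) := by
  obtain ⟨s, hs⟩ := IsAlgClosed.exists_pow_nat_eq (z ^ j * q) (n := 2) (by simp)
  have hs0 : s ≠ 0 := ne_zero_pow two_ne_zero (hs ▸ mul_ne_zero (pow_ne_zero j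
    (hz.ne_zero (by simp))) hq0)
  have hs1 : ‖s‖ < 1 := by
    rw [← pow_lt_one_iff_of_nonneg (norm_nonneg s) two_ne_zero, ← norm_pow, hs]
    simpa [hz.norm'_eq_one (by simp)] using hq
  have s_pow (n : ℕ) : s ^ (10 * n) = (q ^ 5) ^ n := by
    rw [mul_comm, pow_mul', show 10 = 2 * 5 from rfl, pow_mul, hs, mul_pow, pow_right_comm,
      hz.pow_eq_one, one_pow, one_mul]
  have h := qPochhammer_pair_five_dissection hs0 hs1 hz.pow_eq_one (hz.ne_one (by simp))
  rw [show 50 = 10 * 5 from rfl, show 20 = 10 * 2 from rfl, s_pow, s_pow, hs,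
    show s ^ 10 = q ^ 5 by simpa using s_pow 1] at h
  rw [h]
  ring

theorem qPochhammer_pair_pow_five {p z : ℂ} (hp0 : p ≠ 0) (hp : ‖p‖ < 1)
    (hz : IsPrimitiveRoot z 5) :
    qPochhammer p p ^ 8 * (qPochhammer (z * p) p * qPochhammer (z⁻¹ * p) p) ^ 5 =
      qPochhammer (p ^ 5) (p ^ 5) ^ 8 *
        (qBracket (p ^ 2) (p ^ 5) ^ 5 +
          p * (z ^ 2 + z ^ 3) ^ 5 * qBracket p (p ^ 5) ^ 5) := by
  obtain ⟨q, rfl⟩ := IsAlgClosed.exists_pow_nat_eq p (n := 5) (by simp)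
  have hq0 : q ≠ 0 := ne_zero_pow (by simp) hp0
  have hq : ‖q‖ < 1 := by
    rwa [norm_pow, pow_lt_one_iff_of_nonneg (norm_nonneg q) (by simp)] at hp
  have product := Finset.prod_congr (s₁ := Finset.range 5) rfl fun j _ =>
    qPochhammer_triple_rotate_dissection hq0 hq hz j
  rw [Finset.prod_mul_distrib, Finset.prod_mul_distrib, Finset.prod_mul_distrib,
    prod_sub_pow_mul_eq hz (by simp), Finset.prod_const, Finset.card_range] at product
  have rotation {c : ℂ} (hc : c ^ 5 = 1) :=
    qPochhammer_mul_prod_rotate Nat.prime_five hz hc hq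
  have trivial_rotation := rotation (one_pow 5)
  simp only [one_mul] at trivial_rotation
  have z_rotation := rotation hz.pow_eq_one
  have inv_rotation := rotation (c := z⁻¹) (by rw [inv_pow, hz.pow_eq_one, inv_one])
  calc _ = (qPochhammer (q ^ 5) (q ^ 5) * qPochhammer (q ^ 5) (q ^ 5) ^ 5) *
        ((qPochhammer (q ^ 5) (q ^ 5) * qPochhammer (z * q ^ 5) (q ^ 5) ^ 5) *
          (qPochhammer (q ^ 5) (q ^ 5) * qPochhammer (z⁻¹ * q ^ 5) (q ^ 5) ^ 5)) := by ring_nf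
    _ = qPochhammer ((q ^ 5) ^ 5) ((q ^ 5) ^ 5) ^ 3 *
        ((∏ j ∈ Finset.range 5, qPochhammer (z ^ j * q) (z ^ j * q)) *
          ((∏ j ∈ Finset.range 5, qPochhammer (z * (z ^ j * q)) (z ^ j * q)) *
            ∏ j ∈ Finset.range 5, qPochhammer (z⁻¹ * (z ^ j * q)) (z ^ j * q))) := by
      rw [← trivial_rotation, ← z_rotation, ← inv_rotation]
      ring
    _ = _ := by
      rw [product]
      ring

end FifthPower

section GoldenQuotient

theorem ofReal_tprod (f : ℕ → ℝ) : ((∏' k, f k : ℝ) : ℂ) = ∏' k, (f k : ℂ) :=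
  Function.LeftInverse.map_tprod f (g := Complex.ofRealHom) Complex.continuous_ofReal
    Complex.continuous_re Complex.ofReal_re

theorem ofReal_qPochhammer (x q : ℝ) :
    ((qPochhammer x q : ℝ) : ℂ) = qPochhammer (x : ℂ) (q : ℂ) := by
  simp [qPochhammer, ofReal_tprod]

theorem ofReal_qBracket (x q : ℝ) : ((qBracket x q : ℝ) : ℂ) = qBracket (x : ℂ) (q : ℂ) := by
  simp [qBracket, ofReal_qPochhammer]

theorem ofReal_quadPochhammer (a x q : ℝ) :
    ((quadPochhammer a x q : ℝ) : ℂ) = quadPochhammer (a : ℂ) (x : ℂ) (q : ℂ) := by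
  simp [quadPochhammer, ofReal_tprod]

theorem exists_isPrimitiveRoot_five {a : ℂ} (ha : a ^ 2 = a + 1) :
    ∃ z : ℂ, IsPrimitiveRoot z 5 ∧ z + z⁻¹ = -a := by
  obtain ⟨d, hd⟩ := IsAlgClosed.exists_pow_nat_eq (a ^ 2 - 4) two_pos
  obtain ⟨z, rfl⟩ : ∃ z, d = 2 * z + a := ⟨(d - a) / 2, by ring⟩
  have quadratic : z ^ 2 + a * z + 1 = 0 := by linear_combination hd / 4
  have hz0 : z ≠ 0 := fun h => by simp [h] at quadratic
  have : Fact (Nat.Prime 5) := ⟨Nat.prime_five⟩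
  refine ⟨z, ?_, ?_⟩
  · rw [← Polynomial.isRoot_cyclotomic_iff, Polynomial.IsRoot, Polynomial.cyclotomic_prime ℂ 5]
    simp only [Finset.sum_range_succ, Finset.sum_range_zero, Polynomial.eval_add,
      Polynomial.eval_pow, Polynomial.eval_X, Polynomial.eval_zero]
    linear_combination (z ^ 2 + (1 - a) * z + 1) * quadratic + z ^ 2 * ha
  · field_simp
    linear_combination quadratic

variable {Q a : ℝ}

theorem qPochhammer_pow_eight_mul_quadPochhammer_pow_five (h0 : Q ≠ 0) (h1 : ‖Q‖ < 1)
    (ha : a ^ 2 = a + 1) :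
    qPochhammer Q Q ^ 8 * quadPochhammer a Q Q ^ 5 =
      qPochhammer (Q ^ 5) (Q ^ 5) ^ 8 *
        (qBracket (Q ^ 2) (Q ^ 5) ^ 5 - Q * (1 - a) ^ 5 * qBracket Q (Q ^ 5) ^ 5) := by
  have h1' : ‖(Q : ℂ)‖ < 1 := by simpa using h1
  have ha' : (a : ℂ) ^ 2 = a + 1 := by exact_mod_cast ha
  obtain ⟨z, hz, hza⟩ := exists_isPrimitiveRoot_five ha'
  have hz0 : z ≠ 0 := hz.ne_zero (by simp)
  have trace : z ^ 2 + z ^ 3 = a - 1 := by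
    have hinv : z * z⁻¹ = 1 := mul_inv_cancel₀ hz0
    have hcube : z ^ 3 = z⁻¹ ^ 2 := by
      linear_combination z⁻¹ ^ 2 * hz.pow_eq_one - z ^ 3 * (z * z⁻¹ + 1) * hinv
    linear_combination hcube + (z + z⁻¹ - a) * hza - 2 * hinv + ha'
  have h := qPochhammer_pair_pow_five (Complex.ofReal_ne_zero.2 h0) h1' hz
  rw [← quadPochhammer_eq_mul hz0 hza _ h1', trace] at h
  rw [← Complex.ofReal_inj]
  push_cast [ofReal_qPochhammer, ofReal_qBracket, ofReal_quadPochhammer]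
  linear_combination h

theorem exists_quadPochhammer_self_pow_five_eq (h0 : Q ≠ 0) (h1 : ‖Q‖ < 1) :
    ∃ C : ℝ, C ≠ 0 ∧ ∀ a, a ^ 2 = a + 1 →
      quadPochhammer a Q Q ^ 5 = C * (1 - ((1 - a) * RR Q) ^ 5) := by
  have h5 {n : ℕ} (hn : n ≠ 0) : ‖Q ^ n‖ < 1 := norm_pow_lt_one h1 hn
  have hE := qPochhammer_ne_zero h1 h1
  have hF := qPochhammer_ne_zero (h5 (n := 5) (by simp)) (h5 (n := 5) (by simp))
  have hB : qBracket (Q ^ 2) (Q ^ 5) ≠ 0 := by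
    refine mul_ne_zero (qPochhammer_ne_zero (h5 (by simp)) (h5 (by simp))) ?_
    rw [show Q ^ 5 / Q ^ 2 = Q ^ 3 by field_simp]
    exact qPochhammer_ne_zero (h5 (by simp)) (h5 (by simp))
  refine ⟨qPochhammer (Q ^ 5) (Q ^ 5) ^ 8 * qBracket (Q ^ 2) (Q ^ 5) ^ 5 / qPochhammer Q Q ^ 8,
    by positivity, fun a ha => ?_⟩
  rw [RR_eq_mul_qBracket_div h0 h1, mul_pow, mul_pow, fifthRoot_pow_five, div_pow,
    div_mul_eq_mul_div, eq_div_iff (pow_ne_zero 8 hE), mul_comm,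
    qPochhammer_pow_eight_mul_quadPochhammer_pow_five h0 h1 ha]
  field_simp

theorem one_sub_mul_RR_pow_five_ne_zero (h0 : Q ≠ 0) (h1 : ‖Q‖ < 1) (ha : a ^ 2 = a + 1) :
    1 - (a * RR Q) ^ 5 ≠ 0 := by
  have hb : (1 - a) ^ 2 = (1 - a) + 1 := by linear_combination ha
  obtain ⟨C, -, hC⟩ := exists_quadPochhammer_self_pow_five_eq h0 h1
  have hne := pow_ne_zero 5 (quadPochhammer_ne_zero hb h1 h1)
  rw [hC _ hb, sub_sub_cancel] at hne
  exact right_ne_zero_of_mul hne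

theorem exists_quadPochhammer_sq_pow_five_mul_eq (h0 : Q ≠ 0) (h1 : ‖Q‖ < 1) :
    ∃ C : ℝ, C ≠ 0 ∧ ∀ a, a ^ 2 = a + 1 →
      quadPochhammer a Q (Q ^ 2) ^ 5 * (1 - ((1 - a) * RR (Q ^ 2)) ^ 5) =
        C * (1 - ((1 - a) * RR Q) ^ 5) := by
  obtain ⟨C, hC0, hC⟩ := exists_quadPochhammer_self_pow_five_eq h0 h1
  obtain ⟨D, hD0, hD⟩ := exists_quadPochhammer_self_pow_five_eq (pow_ne_zero 2 h0)
    (norm_pow_lt_one h1 two_ne_zero)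
  refine ⟨C / D, div_ne_zero hC0 hD0, fun a ha => ?_⟩
  rw [div_mul_eq_mul_div, eq_div_iff hD0, ← hC a ha, quadPochhammer_eq_mul_sq a Q h1, ← sq,
    mul_pow (quadPochhammer a Q (Q ^ 2)), hD a ha]
  ring

theorem quadPochhammer_pow_five_mul_eq (h0 : Q ≠ 0) (h1 : ‖Q‖ < 1) (ha : a ^ 2 = a + 1) :
    quadPochhammer (1 - a) Q (Q ^ 2) ^ 5 *
        ((1 - ((1 - a) * RR Q) ^ 5) * (1 - (a * RR (Q ^ 2)) ^ 5)) =
      quadPochhammer a Q (Q ^ 2) ^ 5 *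
        ((1 - (a * RR Q) ^ 5) * (1 - ((1 - a) * RR (Q ^ 2)) ^ 5)) := by
  obtain ⟨C, hC0, hC⟩ := exists_quadPochhammer_sq_pow_five_mul_eq h0 h1
  have h := hC a ha
  have hconj := hC (1 - a) (by linear_combination ha)
  rw [sub_sub_cancel] at hconj
  refine mul_left_cancel₀ hC0 ?_
  linear_combination C * (1 - ((1 - a) * RR Q) ^ 5) * hconj - C * (1 - (a * RR Q) ^ 5) * h

/-- The quartic `2 - k + 18k² + k³ + 2k⁴ ± 5√5 (k + k³)`, the sign being carried by the root `a` of
`a² = a + 1` through `2a - 1 = ±√5`. -/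
def goldenQuartic (a k : ℝ) : ℝ :=
  2 - k + 18 * k ^ 2 + k ^ 3 + 2 * k ^ 4 + 5 * (2 * a - 1) * (k + k ^ 3)

theorem goldenQuartic_ramanujanK (h0 : Q ≠ 0) (h1 : ‖Q‖ < 1) (ha : a ^ 2 = a + 1) :
    (1 - 4 * ramanujanK Q - ramanujanK Q ^ 2) * goldenQuartic a (ramanujanK Q) =
      2 * ((1 + ramanujanK Q) ^ 2 * (1 - ramanujanK Q)) *
        ((1 - ((1 - a) * RR Q) ^ 5) * (1 - (a * RR (Q ^ 2)) ^ 5)) := by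
  have hadd := one_add_ramanujanK_ne_zero h0 h1
  have hsub := one_sub_ramanujanK_ne_zero h0 h1
  have pow_five : a ^ 5 = 5 * a + 3 := by
    linear_combination (a ^ 3 + a ^ 2 + 2 * a + 3) * ha
  have conj_pow_five : (1 - a) ^ 5 = 8 - 5 * a := by
    linear_combination (-a ^ 3 + 4 * a ^ 2 - 7 * a + 7) * ha
  rw [mul_pow, mul_pow, RR_pow_five h0 h1, RR_sq_pow_five h0 h1, pow_five, conj_pow_five,
    goldenQuartic]
  generalize ramanujanK Q = k at *
  field_simp
  linear_combination 50 * (k ^ 3 * (1 - k) ^ 2 * (1 + k)) * ha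

theorem quadPochhammer_div_pow_five (h0 : Q ≠ 0) (h1 : ‖Q‖ < 1) (ha : a ^ 2 = a + 1) :
    (quadPochhammer (1 - a) Q (Q ^ 2) / quadPochhammer a Q (Q ^ 2)) ^ 5 =
      goldenQuartic (1 - a) (ramanujanK Q) / goldenQuartic a (ramanujanK Q) := by
  have hb : (1 - a) ^ 2 = (1 - a) + 1 := by linear_combination ha
  have hv0 := pow_ne_zero 2 h0
  have hv1 := norm_pow_lt_one h1 two_ne_zero
  have hW := quadPochhammer_ne_zero ha h1 hv1
  have quartic := goldenQuartic_ramanujanK h0 h1 ha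
  have conj_quartic := goldenQuartic_ramanujanK h0 h1 hb
  have factors_ne_zero := mul_ne_zero (mul_ne_zero two_ne_zero
    (mul_ne_zero (pow_ne_zero 2 (one_add_ramanujanK_ne_zero h0 h1))
      (one_sub_ramanujanK_ne_zero h0 h1)))
    (mul_ne_zero (one_sub_mul_RR_pow_five_ne_zero h0 h1 hb)
      (one_sub_mul_RR_pow_five_ne_zero hv0 hv1 ha))
  rw [← quartic] at factors_ne_zero
  rw [sub_sub_cancel] at conj_quartic
  rw [div_pow, div_eq_div_iff (pow_ne_zero 5 hW) (right_ne_zero_of_mul factors_ne_zero)]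
  refine mul_left_cancel₀ (left_ne_zero_of_mul factors_ne_zero) ?_
  linear_combination quadPochhammer (1 - a) Q (Q ^ 2) ^ 5 * quartic -
    quadPochhammer a Q (Q ^ 2) ^ 5 * conj_quartic +
    2 * ((1 + ramanujanK Q) ^ 2 * (1 - ramanujanK Q)) * quadPochhammer_pow_five_mul_eq h0 h1 ha

end GoldenQuotient

section PartialFractions

theorem hasSum_one_div_succ_sq_add_sq {y : ℝ} (hy : y ≠ 0) :
    HasSum (fun n : ℕ => 1 / (((n : ℝ) + 1) ^ 2 + y ^ 2))
      ((Real.pi * (Real.cosh (Real.pi * y) / Real.sinh (Real.pi * y)) - 1 / y) / (2 * y)) := by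
  have hmem : (y : ℂ) * Complex.I ∈ Complex.integerComplement := by
    rintro ⟨n, hn⟩
    exact hy (by simpa using (congrArg Complex.im hn).symm)
  have hy' : (y : ℂ) ≠ 0 := Complex.ofReal_ne_zero.2 hy
  have hsinh : Complex.sinh (Real.pi * y) ≠ 0 := by
    exact_mod_cast Real.sinh_eq_zero.not.2 (mul_ne_zero Real.pi_ne_zero hy)
  have hI := Complex.I_sq
  have value : (((Real.pi * (Real.cosh (Real.pi * y) / Real.sinh (Real.pi * y)) - 1 / y) /
      (2 * y) : ℝ) : ℂ) = -1 / (2 * y * Complex.I) * ∑' n, cotTerm (y * Complex.I) n := by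
    rw [← cot_series_rep' hmem, Complex.cot, ← mul_assoc, Complex.sin_mul_I, Complex.cos_mul_I]
    push_cast
    field_simp
    linear_combination
      (Real.pi * y * Complex.cosh (Real.pi * y) - Complex.sinh (Real.pi * y)) * hI
  rw [← Complex.hasSum_ofReal, value]
  refine ((summable_cotTerm hmem).hasSum.mul_left _).congr_fun fun n => ?_
  have hden : (y : ℂ) ^ 2 + ((n : ℂ) + 1) ^ 2 ≠ 0 := by
    exact_mod_cast (by positivity : 0 < y ^ 2 + ((n : ℝ) + 1) ^ 2).ne'
  have factor : ((y : ℂ) * Complex.I - (n + 1)) * (y * Complex.I + (n + 1)) =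
      -((y : ℂ) ^ 2 + ((n : ℂ) + 1) ^ 2) := by
    linear_combination (y : ℂ) ^ 2 * hI
  have factors_ne_zero := factor.trans_ne (neg_ne_zero.2 hden)
  rw [cotTerm, div_add_div _ _ (left_ne_zero_of_mul factors_ne_zero)
    (right_ne_zero_of_mul factors_ne_zero), factor]
  push_cast
  rw [add_comm (((n : ℂ) + 1) ^ 2)]
  field_simp
  ring

theorem hasSum_one_div_sq_add_sq {y : ℝ} (hy : y ≠ 0) :
    HasSum (fun m : ℤ => 1 / ((m : ℝ) ^ 2 + y ^ 2))
      (Real.pi / y * (Real.cosh (Real.pi * y) / Real.sinh (Real.pi * y))) := by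
  have half := hasSum_one_div_succ_sq_add_sq hy
  convert HasSum.of_add_one_of_neg_add_one (f := fun m : ℤ => 1 / ((m : ℝ) ^ 2 + y ^ 2))
    (half.congr_fun fun n => by push_cast; rfl)
    (half.congr_fun fun n => by push_cast; rw [neg_sq]) using 1
  push_cast
  field_simp
  ring

theorem hasSum_one_div_sq_add_sq_even {y : ℝ} (hy : y ≠ 0) :
    HasSum (fun m : ℤ => if Even m then 1 / ((m : ℝ) ^ 2 + y ^ 2) else 0)
      (Real.pi / (2 * y) * (Real.cosh (Real.pi * y / 2) / Real.sinh (Real.pi * y / 2))) := by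
  have hinj : Function.Injective (fun m : ℤ => 2 * m) := mul_right_injective₀ two_ne_zero
  have value : Real.pi / (2 * y) = 1 / 4 * (Real.pi / (y / 2)) := by
    field_simp
    norm_num
  rw [value, mul_assoc, mul_div_assoc Real.pi, ← hinj.hasSum_iff]
  · refine ((hasSum_one_div_sq_add_sq (div_ne_zero hy two_ne_zero)).mul_left _).congr_fun
      fun m => ?_
    rw [Function.comp_apply, if_pos (even_two_mul m), one_div_mul_one_div]
    push_cast
    ring
  · intro m hm
    rw [if_neg]
    rintro ⟨k, rfl⟩
    exact hm ⟨k, two_mul k⟩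

theorem hasSum_neg_one_zpow_div_sq_add_sq {y : ℝ} (hy : y ≠ 0) :
    HasSum (fun m : ℤ => (-1 : ℝ) ^ m / ((m : ℝ) ^ 2 + y ^ 2))
      (Real.pi / (y * Real.sinh (Real.pi * y))) := by
  have hsinh : Real.sinh (Real.pi * y / 2) ≠ 0 :=
    Real.sinh_eq_zero.not.2 (div_ne_zero (mul_ne_zero Real.pi_ne_zero hy) two_ne_zero)
  have hcosh : Real.cosh (Real.pi * y / 2) ≠ 0 := (Real.cosh_pos _).ne'
  have half_angle : Real.pi / (y * Real.sinh (Real.pi * y)) =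
      2 * (Real.pi / (2 * y) * (Real.cosh (Real.pi * y / 2) / Real.sinh (Real.pi * y / 2))) -
        Real.pi / y * (Real.cosh (Real.pi * y) / Real.sinh (Real.pi * y)) := by
    rw [show Real.pi * y = 2 * (Real.pi * y / 2) by ring, Real.sinh_two_mul, Real.cosh_two_mul,
      mul_div_cancel_left₀ _ (two_ne_zero (α := ℝ))]
    have pythagoras := Real.cosh_sq (Real.pi * y / 2)
    generalize Real.sinh (Real.pi * y / 2) = s at *
    generalize Real.cosh (Real.pi * y / 2) = c at *
    field_simp
    linear_combination -pythagoras
  rw [half_angle]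
  refine (((hasSum_one_div_sq_add_sq_even hy).mul_left 2).sub
    (hasSum_one_div_sq_add_sq hy)).congr_fun fun m => ?_
  split_ifs with hm
  · rw [hm.neg_one_zpow]
    ring
  · rw [(Int.not_even_iff_odd.1 hm).neg_one_zpow]
    ring

theorem hasSum_neg_one_zpow_div_mul_sq_add_sq {x y : ℝ} (hx : x ≠ 0) (hy : y ≠ 0) :
    HasSum (fun m : ℤ => (-1 : ℝ) ^ m / ((x * m) ^ 2 + y ^ 2))
      (Real.pi / (x * (y * Real.sinh (Real.pi * y / x)))) := by
  have value : Real.pi / (x * (y * Real.sinh (Real.pi * y / x))) =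
      1 / x ^ 2 * (Real.pi / (y / x * Real.sinh (Real.pi * (y / x)))) := by
    rw [mul_div_assoc Real.pi]
    field_simp
  rw [value]
  refine ((hasSum_neg_one_zpow_div_sq_add_sq (div_ne_zero hy hx)).mul_left _).congr_fun fun m => ?_
  rw [show (x * m) ^ 2 + y ^ 2 = x ^ 2 * (m ^ 2 + (y / x) ^ 2) by field_simp,
    div_mul_div_comm, one_mul]

theorem hasSum_exp_neg_pow_odd {w : ℝ} (hw : 0 < w) :
    HasSum (fun k : ℕ => Real.exp (-w) ^ (2 * k + 1)) (1 / (2 * Real.sinh w)) := by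
  have hlt : Real.exp (-w) ^ 2 < 1 :=
    pow_lt_one₀ (Real.exp_pos _).le (Real.exp_lt_one_iff.2 (neg_lt_zero.2 hw)) two_ne_zero
  have value : 1 / (2 * Real.sinh w) = Real.exp (-w) * (1 - Real.exp (-w) ^ 2)⁻¹ := by
    have hexp : Real.exp w * Real.exp (-w) = 1 := by
      rw [← Real.exp_add, add_neg_cancel, Real.exp_zero]
    have hsinh : 2 * Real.sinh w = Real.exp w - Real.exp (-w) := by
      rw [Real.sinh_eq, mul_div_cancel₀ _ two_ne_zero]
    have hne : 2 * Real.sinh w ≠ 0 := mul_ne_zero two_ne_zero (Real.sinh_pos_iff.2 hw).ne'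
    rw [← div_eq_mul_inv, div_eq_div_iff hne (sub_pos.2 hlt).ne', hsinh]
    linear_combination -hexp
  rw [value]
  refine ((hasSum_geometric_of_lt_one (sq_nonneg _) hlt).mul_left _).congr_fun fun k => ?_
  rw [← pow_mul, pow_succ']

theorem hasSum_pow_odd_pow_natAbs_div {x : ℝ} (hx : 0 < x) {b : ℤ} (hb : b ≠ 0) :
    HasSum (fun k : ℕ => (Real.exp (-Real.pi / x) ^ (2 * k + 1)) ^ b.natAbs / b.natAbs)
      (x / (2 * Real.pi) * ∑' m : ℤ, (-1 : ℝ) ^ m / ((x * m) ^ 2 + (b : ℝ) ^ 2)) := by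
  have hpos : (0 : ℝ) < b.natAbs := by exact_mod_cast Int.natAbs_pos.2 hb
  have hsq : (b : ℝ) ^ 2 = (b.natAbs : ℝ) ^ 2 := by rw [Nat.cast_natAbs, Int.cast_abs, sq_abs]
  have hw : 0 < Real.pi * b.natAbs / x := by positivity
  have value : x / (2 * Real.pi) * ∑' m : ℤ, (-1 : ℝ) ^ m / ((x * m) ^ 2 + (b : ℝ) ^ 2) =
      1 / (2 * Real.sinh (Real.pi * b.natAbs / x)) / b.natAbs := by
    rw [hsq, (hasSum_neg_one_zpow_div_mul_sq_add_sq hx.ne' hpos.ne').tsum_eq]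
    have := Real.sinh_pos_iff.2 hw
    field_simp
  rw [value]
  refine ((hasSum_exp_neg_pow_odd hw).div_const _).congr_fun fun k => ?_
  rw [pow_right_comm, ← Real.exp_nat_mul]
  ring_nf

end PartialFractions

section LogSeries

theorem hasSum_log_of_hasProd {ι : Type*} {f : ι → ℝ} {a : ℝ} (ha : a ≠ 0) (h : HasProd f a) :
    HasSum (fun i => Real.log (f i)) (Real.log a) := by
  have factor_ne_zero (i : ι) : f i ≠ 0 := fun hi =>
    ha (h.unique (hasProd_zero_of_exists_eq_zero ⟨i, hi⟩))
  refine ((Real.continuousAt_log ha).tendsto.comp h).congr fun s => ?_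
  exact Real.log_prod fun i _ => factor_ne_zero i

theorem hasSum_log_norm_one_add {w : ℂ} (hw : ‖w‖ < 1) :
    HasSum (fun n : ℕ => (-1 : ℝ) ^ (n + 1) * (w ^ n).re / n) (Real.log ‖1 + w‖) := by
  rw [← Complex.log_re]
  refine (Complex.hasSum_re (Complex.hasSum_taylorSeries_log hw)).congr_fun fun n => ?_
  rw [show (-1 : ℂ) ^ (n + 1) * w ^ n / n = ((-1 : ℝ) ^ (n + 1) / n : ℝ) * w ^ n by push_cast; ring,
    Complex.re_ofReal_mul]
  ring

theorem hasSum_log_one_add {r : ℝ} (hr : |r| < 1) :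
    HasSum (fun n : ℕ => (-1 : ℝ) ^ (n + 1) * r ^ n / n) (Real.log (1 + r)) := by
  have h := hasSum_log_norm_one_add (w := r) (by simpa using hr)
  rw [← Complex.ofReal_one, ← Complex.ofReal_add, Complex.norm_real, Real.norm_eq_abs,
    Real.log_abs] at h
  exact h.congr_fun fun n => by rw [← Complex.ofReal_pow, Complex.ofReal_re]

theorem hasSum_log_quadratic {z : ℂ} (hz : ‖z‖ = 1) {a : ℝ} (ha : z + z⁻¹ = -a) {r : ℝ}
    (hr : |r| < 1) :
    HasSum (fun n : ℕ => (-1 : ℝ) ^ (n + 1) * r ^ n / n * (z ^ n + z⁻¹ ^ n).re)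
      (Real.log (1 - a * r + r ^ 2)) := by
  have norm_lt {w : ℂ} (hw : ‖w‖ = 1) : ‖w * r‖ < 1 := by simpa [hw] using hr
  have norm_ne {w : ℂ} (hw : ‖w‖ = 1) : ‖1 + w * r‖ ≠ 0 := fun h => by
    have := norm_lt hw
    rw [eq_neg_of_add_eq_zero_right (norm_eq_zero.1 h)] at this
    simp at this
  have hz' : ‖z⁻¹‖ = 1 := by rw [norm_inv, hz, inv_one]
  have hinv : z * z⁻¹ = 1 := mul_inv_cancel₀ (norm_ne_zero_iff.1 (by rw [hz]; exact one_ne_zero))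
  have factor : (1 + z * r) * (1 + z⁻¹ * r) = ((1 - a * r + r ^ 2 : ℝ) : ℂ) := by
    push_cast
    linear_combination r * ha + r ^ 2 * hinv
  have value : Real.log (1 - a * r + r ^ 2) =
      Real.log ‖1 + z * r‖ + Real.log ‖1 + z⁻¹ * r‖ := by
    rw [← Real.log_mul (norm_ne hz) (norm_ne hz'), ← norm_mul, factor, Complex.norm_real,
      Real.norm_eq_abs, Real.log_abs]
  rw [value]
  refine ((hasSum_log_norm_one_add (norm_lt hz)).add
    (hasSum_log_norm_one_add (norm_lt hz'))).congr_fun fun n => ?_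
  simp only [mul_pow, ← Complex.ofReal_pow, Complex.re_mul_ofReal, Complex.add_re]
  ring

theorem sum_pow_pow_eq_ite {K : Type*} [Field K] {z : K} {l : ℕ} (hz : IsPrimitiveRoot z l)
    (n : ℕ) : ∑ j ∈ Finset.range l, (z ^ n) ^ j = if l ∣ n then (l : K) else 0 := by
  split_ifs with hn
  · simp [(hz.pow_eq_one_iff_dvd n).2 hn]
  · have hne : z ^ n - 1 ≠ 0 := sub_ne_zero.2 ((hz.pow_eq_one_iff_dvd n).not.2 hn)
    refine (mul_eq_zero.1 ?_).resolve_right hne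
    rw [geom_sum_mul, pow_right_comm, hz.pow_eq_one, one_pow, sub_self]

theorem two_sub_trace_eq_ite {a z : ℂ} (ha : a ^ 2 = a + 1) (hz : IsPrimitiveRoot z 5)
    (hza : z + z⁻¹ = -a) (n : ℕ) :
    2 - a * (z ^ n + z⁻¹ ^ n) - (1 - a) * ((z ^ 2) ^ n + (z ^ 2)⁻¹ ^ n) =
      if n % 5 = 1 ∨ n % 5 = 4 then 5 else 0 := by
  have h5 := hz.pow_eq_one
  have hinv : z⁻¹ = z ^ 4 := inv_eq_of_mul_eq_one_right (by rw [← h5]; ring)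
  have hn : (z ^ n) ^ 5 = 1 := by rw [pow_right_comm, h5, one_pow]
  have trace : a = -(z + z ^ 4) := by rw [← hinv, hza, neg_neg]
  have conj_trace : 1 - a = -(z ^ 2 + z ^ 3) := by
    linear_combination (z + z ^ 4 - a) * trace + ha - (z ^ 3 + 2) * h5
  have expand : 2 - a * (z ^ n + z⁻¹ ^ n) - (1 - a) * ((z ^ 2) ^ n + (z ^ 2)⁻¹ ^ n) =
      ∑ j ∈ Finset.range 5, (z ^ (n + 1)) ^ j + ∑ j ∈ Finset.range 5, (z ^ (n + 4)) ^ j := by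
    simp only [Finset.sum_range_succ, Finset.sum_range_zero, ← inv_pow, hinv, pow_right_comm z _ n,
      pow_right_comm (z ^ _) _ n, pow_add]
    rw [conj_trace, trace]
    generalize z ^ n = y at *
    linear_combination (z ^ 3 + z ^ 2) * y ^ 3 * hn -
      (z * y ^ 4 * (z ^ 10 + z ^ 5 + 1) + z ^ 3 * y ^ 2 + z ^ 2 * y ^ 3 * (z ^ 5 + 1)) * h5
  rw [expand, sum_pow_pow_eq_ite hz, sum_pow_pow_eq_ite hz]
  rcases (by lia : n % 5 = 1 ∨ n % 5 = 4 ∨ (n % 5 ≠ 1 ∧ n % 5 ≠ 4)) with h | h | h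
  · rw [if_neg (by lia), if_pos (by lia), if_pos (by lia)]
    norm_num
  · rw [if_pos (by lia), if_neg (by lia), if_pos (by lia)]
    norm_num
  · rw [if_neg (by lia), if_neg (by lia), if_neg (by lia), add_zero]

theorem hasSum_mod_five_log {a r : ℝ} (ha : a ^ 2 = a + 1) (hr : |r| < 1) :
    HasSum (fun n : ℕ => if n % 5 = 1 ∨ n % 5 = 4 then (-1 : ℝ) ^ (n + 1) * r ^ n / n else 0)
      ((2 * Real.log (1 + r) - a * Real.log (1 - a * r + r ^ 2) -
        (1 - a) * Real.log (1 - (1 - a) * r + r ^ 2)) / 5) := by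
  have ha' : (a : ℂ) ^ 2 = a + 1 := by exact_mod_cast ha
  obtain ⟨z, hz, hza⟩ := exists_isPrimitiveRoot_five ha'
  have hz0 : z ≠ 0 := hz.ne_zero (by simp)
  have hnorm : ‖z‖ = 1 := hz.norm'_eq_one (by simp)
  have hnorm_sq : ‖z ^ 2‖ = 1 := by rw [norm_pow, hnorm, one_pow]
  have hza_sq : z ^ 2 + (z ^ 2)⁻¹ = -((1 - a : ℝ) : ℂ) := by
    push_cast
    rw [← inv_pow]
    linear_combination (z + z⁻¹ - a) * hza - 2 * mul_inv_cancel₀ hz0 + ha'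
  refine ((((hasSum_log_one_add hr).mul_left 2).sub
    ((hasSum_log_quadratic hnorm hza hr).mul_left a)).sub
    ((hasSum_log_quadratic hnorm_sq hza_sq hr).mul_left (1 - a))).div_const 5
    |>.congr_fun fun n => ?_
  have detect := congrArg Complex.re (two_sub_trace_eq_ite ha' hz hza n)
  rw [← Complex.ofReal_one, ← Complex.ofReal_sub, Complex.sub_re, Complex.sub_re,
    Complex.re_ofReal_mul, Complex.re_ofReal_mul, Complex.re_ofNat] at detect
  split_ifs at detect ⊢ with hn
  · rw [Complex.re_ofNat] at detect
    linear_combination -((-1 : ℝ) ^ (n + 1) * r ^ n / n / 5) * detect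
  · rw [Complex.zero_re] at detect
    linear_combination -((-1 : ℝ) ^ (n + 1) * r ^ n / n / 5) * detect

theorem injective_natAbs_five_mul_add_one :
    Function.Injective fun n : ℤ => (5 * n + 1).natAbs := fun m n h => by
  simp only at h
  lia

theorem neg_one_pow_natAbs_five_mul_add_one (n : ℤ) :
    (-1 : ℝ) ^ ((5 * n + 1).natAbs + 1) = (-1) ^ n := by
  rcases Int.even_or_odd' n with ⟨k, rfl | rfl⟩
  · rw [(even_two_mul k).neg_one_zpow, Even.neg_one_pow (Nat.even_iff.2 (by lia))]
  · rw [(odd_two_mul_add_one k).neg_one_zpow, Odd.neg_one_pow (Nat.odd_iff.2 (by lia))]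

theorem hasSum_natAbs_five_mul_add_one_log {a r : ℝ} (ha : a ^ 2 = a + 1) (hr : |r| < 1) :
    HasSum (fun n : ℤ => (-1 : ℝ) ^ n * (r ^ (5 * n + 1).natAbs / (5 * n + 1).natAbs))
      ((2 * Real.log (1 + r) - a * Real.log (1 - a * r + r ^ 2) -
        (1 - a) * Real.log (1 - (1 - a) * r + r ^ 2)) / 5) := by
  have h := hasSum_mod_five_log ha hr
  rw [← injective_natAbs_five_mul_add_one.hasSum_iff] at h
  · refine h.congr_fun fun n => ?_
    rw [Function.comp_apply, if_pos (by lia), neg_one_pow_natAbs_five_mul_add_one, mul_div_assoc]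
  · refine fun m hm => if_neg ?_
    rintro (h1 | h4)
    · exact hm ⟨(m : ℤ) / 5, by simp only; lia⟩
    · exact hm ⟨-((m : ℤ) + 1) / 5, by simp only; lia⟩

end LogSeries

section LatticeSum

variable {q : ℝ}

theorem hasSum_log_one_add_pow_odd (hq : |q| < 1) :
    HasSum (fun k : ℕ => Real.log (1 + q ^ (2 * k + 1)))
      (Real.log (qPochhammer (-q) ((-q) ^ 2))) := by
  have hQ : ‖-q‖ < 1 := by rwa [norm_neg]
  have hQ2 := norm_pow_lt_one hQ two_ne_zero
  refine (hasSum_log_of_hasProd (qPochhammer_ne_zero hQ2 hQ)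
    (hasProd_qPochhammer _ hQ2)).congr_fun fun k => ?_
  congr 1
  ring

theorem hasSum_log_quadratic_pow_odd {a : ℝ} (ha : a ^ 2 = a + 1) (hq : |q| < 1) :
    HasSum (fun k : ℕ => Real.log (1 - a * q ^ (2 * k + 1) + (q ^ (2 * k + 1)) ^ 2))
      (Real.log (quadPochhammer a (-q) ((-q) ^ 2))) := by
  have hQ : ‖-q‖ < 1 := by rwa [norm_neg]
  have hQ2 := norm_pow_lt_one hQ two_ne_zero
  refine (hasSum_log_of_hasProd (quadPochhammer_ne_zero ha hQ hQ2)
    (hasProd_quadPochhammer a _ hQ2)).congr_fun fun k => ?_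
  congr 1
  ring

theorem summable_pow_odd_pow_natAbs_div (h0 : 0 ≤ q) (h1 : q < 1) :
    Summable fun p : ℕ × ℤ => (-1 : ℝ) ^ p.2 *
      ((q ^ (2 * p.1 + 1)) ^ (5 * p.2 + 1).natAbs / (5 * p.2 + 1).natAbs) := by
  have geometric := summable_geometric_of_lt_one h0 h1
  have two_sided : Summable fun n : ℤ => q ^ n.natAbs :=
    .of_nat_of_neg (by simpa using geometric) (by simpa using geometric)
  refine .of_norm_bounded (geometric.mul_of_nonneg two_sided (fun k => by positivity)
    fun n => by positivity) fun ⟨k, n⟩ => ?_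
  have hone : (1 : ℝ) ≤ (5 * n + 1).natAbs := by exact_mod_cast (by lia : 1 ≤ (5 * n + 1).natAbs)
  have hexponent : k + n.natAbs ≤ (2 * k + 1) * (5 * n + 1).natAbs := by
    have hpos : 1 ≤ (5 * n + 1).natAbs := by lia
    have hle : n.natAbs ≤ (5 * n + 1).natAbs := by lia
    nlinarith [Nat.mul_le_mul_left k hpos]
  rw [norm_mul, norm_zpow, norm_neg, norm_one, one_zpow, one_mul,
    Real.norm_of_nonneg (by positivity), ← pow_mul, ← pow_add]
  exact (div_le_self (by positivity) hone).trans (pow_le_pow_of_le_one h0 h1.le hexponent)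

theorem hasSum_pow_odd_pow_natAbs_div_log {a : ℝ} (ha : a ^ 2 = a + 1) (h0 : 0 ≤ q)
    (h1 : q < 1) :
    HasSum (fun p : ℕ × ℤ => (-1 : ℝ) ^ p.2 *
        ((q ^ (2 * p.1 + 1)) ^ (5 * p.2 + 1).natAbs / (5 * p.2 + 1).natAbs))
      ((2 * Real.log (qPochhammer (-q) ((-q) ^ 2)) -
        a * Real.log (quadPochhammer a (-q) ((-q) ^ 2)) -
        (1 - a) * Real.log (quadPochhammer (1 - a) (-q) ((-q) ^ 2))) / 5) := by
  have hb : (1 - a) ^ 2 = (1 - a) + 1 := by linear_combination ha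
  have habs : |q| < 1 := by rwa [abs_of_nonneg h0]
  have hpow (k : ℕ) : |q ^ (2 * k + 1)| < 1 := by
    rw [abs_pow]
    exact pow_lt_one₀ (abs_nonneg q) habs (2 * k).succ_ne_zero
  have double := (summable_pow_odd_pow_natAbs_div h0 h1).hasSum
  have row (k : ℕ) := hasSum_natAbs_five_mul_add_one_log ha (hpow k)
  have rows := double.prod_fiberwise row
  have products := ((((hasSum_log_one_add_pow_odd habs).mul_left 2).sub
    ((hasSum_log_quadratic_pow_odd ha habs).mul_left a)).sub
    ((hasSum_log_quadratic_pow_odd hb habs).mul_left (1 - a))).div_const 5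
  rw [← rows.unique products]
  exact double

theorem exp_neg_pi_div_lt_one {x : ℝ} (hx : 0 < x) : Real.exp (-Real.pi / x) < 1 := by
  rw [neg_div, Real.exp_lt_one_iff, neg_lt_zero]
  positivity

theorem hasSum_lattice_rows {x a : ℝ} (hx : 0 < x) (ha : a ^ 2 = a + 1)
    (hq : q = Real.exp (-Real.pi / x)) :
    HasSum (fun n : ℤ => ∑' m : ℤ, (-1 : ℝ) ^ (m + n) / ((x * m) ^ 2 + (5 * (n : ℝ) + 1) ^ 2))
      (2 * Real.pi / (5 * x) * (2 * Real.log (qPochhammer (-q) ((-q) ^ 2)) -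
        a * Real.log (quadPochhammer a (-q) ((-q) ^ 2)) -
        (1 - a) * Real.log (quadPochhammer (1 - a) (-q) ((-q) ^ 2)))) := by
  subst hq
  have double := hasSum_pow_odd_pow_natAbs_div_log ha (Real.exp_pos (-Real.pi / x)).le
    (exp_neg_pi_div_lt_one hx)
  rw [← (Equiv.prodComm ℤ ℕ).hasSum_iff] at double
  have columns := double.prod_fiberwise fun n =>
    (hasSum_pow_odd_pow_natAbs_div hx (b := 5 * n + 1) (by lia)).mul_left ((-1 : ℝ) ^ n)
  rw [show 2 * Real.pi / (5 * x) = 2 * Real.pi / x / 5 by ring, div_mul_eq_mul_div, mul_div_assoc]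
  refine (columns.mul_left (2 * Real.pi / x)).congr_fun fun n => ?_
  have signs : ∑' m : ℤ, (-1 : ℝ) ^ (m + n) / ((x * m) ^ 2 + (5 * (n : ℝ) + 1) ^ 2) =
      (-1) ^ n * ∑' m : ℤ, (-1 : ℝ) ^ m / ((x * m) ^ 2 + ((5 * n + 1 : ℤ) : ℝ) ^ 2) := by
    rw [← tsum_mul_left]
    refine tsum_congr fun m => ?_
    push_cast
    rw [zpow_add₀ (by simp), mul_comm, mul_div_assoc]
  rw [signs]
  field_simp

theorem log_products_eq_log_ramanujanK {Q a : ℝ} (h0 : Q ≠ 0) (h1 : ‖Q‖ < 1)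
    (ha : a ^ 2 = a + 1) :
    2 * (2 * Real.log (qPochhammer Q (Q ^ 2)) - a * Real.log (quadPochhammer a Q (Q ^ 2)) -
        (1 - a) * Real.log (quadPochhammer (1 - a) Q (Q ^ 2))) =
      -((2 * a - 1) / 5 * Real.log (goldenQuartic a (ramanujanK Q) /
          goldenQuartic (1 - a) (ramanujanK Q))) -
        Real.log ((1 + ramanujanK Q - ramanujanK Q ^ 2) /
          (1 - 4 * ramanujanK Q - ramanujanK Q ^ 2)) := by
  have hb : (1 - a) ^ 2 = (1 - a) + 1 := by linear_combination ha
  have hQ2 := norm_pow_lt_one h1 two_ne_zero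
  have hP := qPochhammer_ne_zero hQ2 h1
  have hW := quadPochhammer_ne_zero ha h1 hQ2
  have hW' := quadPochhammer_ne_zero hb h1 hQ2
  have five : qPochhammer Q (Q ^ 2) * quadPochhammer a Q (Q ^ 2) *
      quadPochhammer (1 - a) Q (Q ^ 2) = qPochhammer (Q ^ 5) (Q ^ 10) := by
    rw [qPochhammer_mul_quadPochhammer_mul_quadPochhammer (by ring) (by linear_combination -ha) Q
      hQ2, ← pow_mul]
  have quotient := qPochhammer_pow_five_div_mul_ramanujanK h0 h1
  have hk : 1 + ramanujanK Q - ramanujanK Q ^ 2 ≠ 0 := fun h => by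
    rw [h, mul_zero] at quotient
    have : ramanujanK Q = 0 := by linear_combination (h + quotient) / 5
    simp [this] at h
  rw [← inv_div (goldenQuartic (1 - a) _), ← quadPochhammer_div_pow_five h0 h1 ha,
    ← inv_div (1 - 4 * ramanujanK Q - ramanujanK Q ^ 2), ← eq_div_of_mul_eq hk quotient,
    Real.log_inv, Real.log_inv, Real.log_pow, Real.log_div hW' hW, ← five,
    Real.log_div (pow_ne_zero 5 hP) (mul_ne_zero (mul_ne_zero hP hW) hW'), Real.log_pow,
    Real.log_mul (mul_ne_zero hP hW) hW', Real.log_mul hP hW]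
  push_cast
  ring

end LatticeSum

theorem goldenQuartic_goldenRatio (k : ℝ) :
    goldenQuartic Real.goldenRatio k =
      2 - k + 18 * k ^ 2 + k ^ 3 + 2 * k ^ 4 + 5 * Real.sqrt 5 * (k + k ^ 3) := by
  rw [goldenQuartic, Real.goldenRatio]
  ring

theorem goldenQuartic_one_sub_goldenRatio (k : ℝ) :
    goldenQuartic (1 - Real.goldenRatio) k =
      2 - k + 18 * k ^ 2 + k ^ 3 + 2 * k ^ 4 - 5 * Real.sqrt 5 * (k + k ^ 3) := by
  rw [goldenQuartic, Real.goldenRatio]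
  ring

/-- For real `x > 0`, with `q = e^{-π/x}` and `μ = R(-q) R²(q²)`,
`F_{(5,1)}(x) = -(π/(5√5 x)) log((2 - μ + 18μ² + μ³ + 2μ⁴ + 5√5(μ + μ³))
  /(2 - μ + 18μ² + μ³ + 2μ⁴ - 5√5(μ + μ³))) - (π/(5x)) log((1 + μ - μ²)/(1 - 4μ - μ²))`. -/
theorem F51_evaluation (x : ℝ) (hx : 0 < x) (q μ : ℝ)
    (hq : q = Real.exp (-Real.pi / x))
    (hμ : μ = RR (-q) * (RR (q ^ 2)) ^ 2) :
    Tendsto (fun N : ℕ => ∑ n ∈ Finset.Ioo (-(N : ℤ)) (N : ℤ),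
        ∑' m : ℤ, (-1 : ℝ) ^ (m + n) / ((x * m) ^ 2 + (5 * (n : ℝ) + 1) ^ 2))
      atTop
      (nhds (-(Real.pi / (5 * Real.sqrt 5 * x)) *
          Real.log ((2 - μ + 18 * μ ^ 2 + μ ^ 3 + 2 * μ ^ 4 + 5 * Real.sqrt 5 * (μ + μ ^ 3))
            / (2 - μ + 18 * μ ^ 2 + μ ^ 3 + 2 * μ ^ 4 - 5 * Real.sqrt 5 * (μ + μ ^ 3)))
        - Real.pi / (5 * x) * Real.log ((1 + μ - μ ^ 2) / (1 - 4 * μ - μ ^ 2)))) := by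
  have hnorm : ‖-q‖ < 1 := by
    rw [hq, norm_neg, Real.norm_of_nonneg (Real.exp_pos _).le]
    exact exp_neg_pi_div_lt_one hx
  have hμ' : μ = ramanujanK (-q) := by rw [hμ, ramanujanK, neg_sq]
  have hcoeff : (2 * Real.goldenRatio - 1) / 5 = 1 / Real.sqrt 5 := by
    rw [Real.goldenRatio]
    field_simp
    norm_num
  have logs := log_products_eq_log_ramanujanK (neg_ne_zero.2 (hq ▸ (Real.exp_pos _).ne')) hnorm
    Real.goldenRatio_sq
  rw [← hμ', hcoeff] at logs
  rw [← goldenQuartic_goldenRatio, ← goldenQuartic_one_sub_goldenRatio]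
  convert (hasSum_lattice_rows hx Real.goldenRatio_sq hq).comp Finset.tendsto_Ioo_neg using 2
  · rfl
  · linear_combination -(Real.pi / (5 * x)) * logs
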